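/- (Lemma 3.1) In the simplified model with constant σ, τ and i.i.d. standard Gaussian noise, the mean squared error of the integrated-volatility estimator satisfies MSE(⟨σ²,1⟩^) = E[(⟨σ²,1⟩^ − σ²)²] = (4/c)(∫₀¹ σ²Λ(u)Λ(1−u) − (τc)² λ(u)λ(1−u) du)² n^{−1/2} + (2/c)(σ² + 2(τc)² ∫₀¹ λ(u)² du)² n^{−1/2} + o(n^{−1/2}); equivalently, lim_{n→∞} n^{1/2} E[(⟨σ²,1⟩^ − σ²)²] = (4/c)(σ² ∫₀¹ Λ(u)Λ(1−u) du − τ²c² ∫₀¹ λ(u)λ(1−u) du)² + (2/c)(σ² + 2τ²c² ∫₀¹ λ(u)² du)². -/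

import Mathlib

open MeasureTheory ProbabilityTheory Real

noncomputable section

/-- `Λ(u) = -∫₀ᵘ λ(v) dv`. -/
def bigLam (lam : ℝ → ℝ) (u : ℝ) : ℝ := -∫ v in (0:ℝ)..u, lam v

/-- A (normalized) pre-average function: piecewise Lipschitz on `[0,2]`,
antisymmetric about `1`, and normalized. -/
structure IsPreAverageFn (lam : ℝ → ℝ) : Prop where
  piecewise_lipschitz : ∃ (N : ℕ) (t : ℕ → ℝ) (K : NNReal),
      0 < N ∧ t 0 = 0 ∧ t N = 2 ∧ (∀ i < N, t i < t (i + 1)) ∧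
      ∀ i < N, LipschitzOnWith K lam (Set.Ioo (t i) (t (i + 1)))
  antisymm : ∀ t ∈ Set.Icc (0:ℝ) 1, lam t = - lam (2 - t)
  normalized : Real.sqrt (2 * ∫ s in (0:ℝ)..1, (∫ u in (0:ℝ)..s, lam u) ^ 2) = 1

/-- `m = n / ⌊√n / c⌋`. -/
def mOf (c : ℝ) (n : ℕ) : ℕ := n / ⌊Real.sqrt n / c⌋₊

/-- The indices `j` with `j/n ∈ [(i-2)/m , i/m]`. -/
def blockIdx (n m i : ℕ) : Finset ℕ :=
  (Finset.range (n + 1)).filter fun j =>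
    ((i : ℝ) - 2) / m ≤ (j : ℝ) / n ∧ (j : ℝ) / n ≤ (i : ℝ) / m

variable {Ω : Type*}

/-- Pre-averaged value `Ā_{i,m} = (m/n) ∑_{j/n ∈ [(i-2)/m, i/m]} λ(m j/n - (i-2)) A_j`. -/
def preAvg (lam : ℝ → ℝ) (n m : ℕ) (A : ℕ → Ω → ℝ) (i : ℕ) (ω : Ω) : ℝ :=
  ((m : ℝ) / n) * ∑ j ∈ blockIdx n m i,
    lam ((m : ℝ) * j / n - ((i : ℝ) - 2)) * A j ω

/-- Bias correction `𝔟(λ, A)_{i,m}`. -/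
def biasCorr (lam : ℝ → ℝ) (n m : ℕ) (A : ℕ → Ω → ℝ) (i : ℕ) (ω : Ω) : ℝ :=
  ((m : ℝ) ^ 2 / (2 * (n : ℝ) ^ 2)) * ∑ j ∈ (blockIdx n m i).filter (fun j => 1 ≤ j),
    (lam ((m : ℝ) * j / n - ((i : ℝ) - 2))) ^ 2 * (A j ω - A (j - 1) ω) ^ 2

/-- The simplified model: `(W_{j/n})_j` and `(η_{j,n})_j` form a centered jointly Gaussian
family with `Cov(W_{j/n}, W_{l/n}) = min(j,l)/n`, `(η_{j,n})` standard Gaussian i.i.d.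
and uncorrelated with the `W` grid values. -/
def IsSimplifiedModel [MeasureSpace Ω] (n : ℕ) (W η : ℕ → Ω → ℝ) : Prop :=
  (∀ j, Measurable (W j)) ∧ (∀ j, Measurable (η j)) ∧
  (∀ a b : ℕ → ℝ, ∃ v : NNReal,
    Measure.map (fun ω => ∑ j ∈ Finset.range (n + 1), (a j * W j ω + b j * η j ω)) ℙ
      = gaussianReal 0 v) ∧
  (∀ j l, j ≤ n → l ≤ n → ∫ ω, W j ω * W l ω = (min j l : ℝ) / n) ∧
  (∀ j l, j ≤ n → l ≤ n → ∫ ω, η j ω * η l ω = if j = l then 1 else 0) ∧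
  (∀ j l, j ≤ n → l ≤ n → ∫ ω, W j ω * η l ω = 0)

/-- The observations `Y_{j,n} = σ W_{j/n} + τ η_{j,n}`. -/
def obs (σ τ : ℝ) (W η : ℕ → Ω → ℝ) (j : ℕ) (ω : Ω) : ℝ := σ * W j ω + τ * η j ω

end

open MeasureTheory ProbabilityTheory Real

/-! ### Gaussian moments -/

lemma gaussian_fourth (v : NNReal) : ∫ x, x ^ 4 ∂(gaussianReal 0 v) = 3 * (v : ℝ) ^ 2 := by
  have h := iteratedDeriv_mgf_zero (X := fun x : ℝ => x) (μ := gaussianReal 0 v) (by simp) 4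
  have h2 : ∫ x, x ^ 4 ∂(gaussianReal 0 v) = iteratedDeriv 4 (mgf (fun x ↦ x) (gaussianReal 0 v)) 0 := by
    rw [h]; rfl
  rw [h2, mgf_fun_id_gaussianReal]
  set w : ℝ := (v : ℝ)
  have e0 : (fun t : ℝ => rexp (0 * t + w * t ^ 2 / 2)) = fun t => rexp (w * t ^ 2 / 2) := by
    funext t; simp
  rw [e0]
  have hE : ∀ t : ℝ, HasDerivAt (fun t : ℝ => rexp (w * t ^ 2 / 2)) (w * t * rexp (w * t ^ 2 / 2)) t := by
    intro t
    have : HasDerivAt (fun t : ℝ => w * t ^ 2 / 2) (w * t) t := by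
      have := (((hasDerivAt_id t).pow 2).const_mul w).div_const 2
      convert! this using 1
      simp; ring
    convert! this.exp using 1
    ring
  have d1 : deriv (fun t : ℝ => rexp (w * t ^ 2 / 2)) = fun t => (w * t) * rexp (w * t ^ 2 / 2) :=
    funext fun t => (hE t).deriv
  have gen : ∀ (p p' : ℝ → ℝ), (∀ t, HasDerivAt p (p' t) t) →
      deriv (fun t : ℝ => p t * rexp (w * t ^ 2 / 2))
        = fun t => (p' t + p t * (w * t)) * rexp (w * t ^ 2 / 2) := by
    intro p p' hp
    funext t
    have := ((hp t).mul (hE t)).deriv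
    simp only [Pi.mul_def] at this
    rw [this]; ring
  have d2 := gen (fun t => w * t) (fun _ => w) (fun t => by
    simpa using (hasDerivAt_id t).const_mul w)
  have d3 := gen (fun t => w + w * t * (w * t)) (fun t => 2 * w ^ 2 * t) (fun t => by
    have := ((((hasDerivAt_id t).const_mul w).mul ((hasDerivAt_id t).const_mul w))).const_add w
    convert! this using 1
    simp; ring)
  have d4 := gen (fun t => 2 * w ^ 2 * t + (w + w * t * (w * t)) * (w * t))
    (fun t => 3 * w ^ 2 + 3 * w ^ 3 * t ^ 2) (fun t => by
    have := (((hasDerivAt_id t).const_mul (3 * w ^ 2))).add (((hasDerivAt_id t).pow 3).const_mul (w ^ 3))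
    convert! this using 1
    · funext t; simp; ring
    · simp; ring)
  rw [iteratedDeriv_succ, iteratedDeriv_succ, iteratedDeriv_succ, iteratedDeriv_one, d1, d2, d3, d4]
  simp

/-- Centered Gaussian random variable. -/
def CG {Ω : Type*} [MeasureSpace Ω] (X : Ω → ℝ) : Prop :=
  Measurable X ∧ ∃ v : NNReal, Measure.map X ℙ = gaussianReal 0 v

section
set_option linter.unusedSectionVars false
variable {Ω : Type*} [MeasureSpace Ω] [IsProbabilityMeasure (ℙ : Measure Ω)]

lemma CG.memLp {X : Ω → ℝ} (h : CG X) (p : NNReal) : MemLp X p ℙ := by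
  obtain ⟨hm, v, hv⟩ := h
  have := memLp_id_gaussianReal (μ := 0) (v := v) p
  rw [← hv, memLp_map_measure_iff (by fun_prop) hm.aemeasurable] at this
  exact this

lemma CG.memLp2 {X : Ω → ℝ} (h : CG X) : MemLp X 2 ℙ := h.memLp 2

lemma CG.memLp_sq {X : Ω → ℝ} (h : CG X) : MemLp (fun ω => X ω ^ 2) 2 ℙ := by
  rw [memLp_two_iff_integrable_sq (h.1.pow_const 2).aestronglyMeasurable]
  have := (h.memLp 4).integrable_norm_pow (by norm_num)
  refine this.congr (ae_of_all _ fun ω => ?_)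
  simp only [Real.norm_eq_abs]
  rw [← pow_mul]
  exact (Even.pow_abs (by decide) _)

lemma CG.mean {X : Ω → ℝ} (h : CG X) : ∫ ω, X ω = 0 := by
  obtain ⟨hm, v, hv⟩ := h
  have := integral_map (μ := ℙ) (φ := X) hm.aemeasurable (f := fun x : ℝ => x) (by fun_prop)
  rw [← this, hv]; simp

lemma CG.fourth {X : Ω → ℝ} (h : CG X) : ∫ ω, X ω ^ 4 = 3 * (∫ ω, X ω ^ 2) ^ 2 := by
  obtain ⟨hm, v, hv⟩ := h
  have h4 := integral_map (μ := ℙ) (φ := X) hm.aemeasurable (f := fun x : ℝ => x ^ 4) (by fun_prop)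
  have h2 := integral_map (μ := ℙ) (φ := X) hm.aemeasurable (f := fun x : ℝ => x ^ 2) (by fun_prop)
  rw [← h4, ← h2, hv, gaussian_fourth]
  have := variance_of_integral_eq_zero (X := fun x : ℝ => x) (μ := gaussianReal 0 v) (by fun_prop) (by simp)
  simp only [variance_fun_id_gaussianReal] at this
  rw [← this]

lemma CG.cov_sq {X Y : Ω → ℝ} (hX : CG X) (hY : CG Y) (hp : CG (fun ω => X ω + Y ω))
    (hm : CG (fun ω => X ω - Y ω)) :
    cov[fun ω => X ω ^ 2, fun ω => Y ω ^ 2; ℙ] = 2 * (∫ ω, X ω * Y ω) ^ 2 := by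
  have iX2 := hX.memLp2.integrable_sq
  have iY2 := hY.memLp2.integrable_sq
  have iXY : Integrable (fun ω => X ω * Y ω) ℙ := hX.memLp2.integrable_mul hY.memLp2
  have iX4 : Integrable (fun ω => X ω ^ 4) ℙ := by
    have := hX.memLp_sq.integrable_sq
    simpa [← pow_mul] using this
  have iY4 : Integrable (fun ω => Y ω ^ 4) ℙ := by
    have := hY.memLp_sq.integrable_sq
    simpa [← pow_mul] using this
  have ip4 : Integrable (fun ω => (X ω + Y ω) ^ 4) ℙ := by
    have := hp.memLp_sq.integrable_sq
    simpa [← pow_mul] using this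
  have im4 : Integrable (fun ω => (X ω - Y ω) ^ 4) ℙ := by
    have := hm.memLp_sq.integrable_sq
    simpa [← pow_mul] using this
  have iXY2 : Integrable (fun ω => X ω ^ 2 * Y ω ^ 2) ℙ := hX.memLp_sq.integrable_mul hY.memLp_sq
  have vp : ∫ ω, (X ω + Y ω) ^ 2 = (∫ ω, X ω ^ 2) + 2 * (∫ ω, X ω * Y ω) + ∫ ω, Y ω ^ 2 := by
    rw [← integral_const_mul, ← integral_add iX2 (iXY.const_mul 2),
      ← integral_add (show Integrable (fun ω => X ω ^ 2 + 2 * (X ω * Y ω)) ℙ from iX2.add (iXY.const_mul 2)) iY2]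
    congr 1; funext ω; ring
  have vm : ∫ ω, (X ω - Y ω) ^ 2 = (∫ ω, X ω ^ 2) - 2 * (∫ ω, X ω * Y ω) + ∫ ω, Y ω ^ 2 := by
    rw [← integral_const_mul, ← integral_sub iX2 (iXY.const_mul 2),
      ← integral_add (show Integrable (fun ω => X ω ^ 2 - 2 * (X ω * Y ω)) ℙ from iX2.sub (iXY.const_mul 2)) iY2]
    congr 1; funext ω; ring
  have key : (∫ ω, (X ω + Y ω) ^ 4) + (∫ ω, (X ω - Y ω) ^ 4)
      = 2 * (∫ ω, X ω ^ 4) + 2 * (∫ ω, Y ω ^ 4) + 12 * ∫ ω, X ω ^ 2 * Y ω ^ 2 := by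
    rw [← integral_add ip4 im4, ← integral_const_mul, ← integral_const_mul, ← integral_const_mul,
      ← integral_add (iX4.const_mul 2) (iY4.const_mul 2),
      ← integral_add (show Integrable (fun ω => 2 * X ω ^ 4 + 2 * Y ω ^ 4) ℙ from (iX4.const_mul 2).add (iY4.const_mul 2)) (iXY2.const_mul 12)]
    congr 1; funext ω; ring
  rw [hp.fourth, hm.fourth, hX.fourth, hY.fourth, vp, vm] at key
  rw [covariance_eq_sub hX.memLp_sq hY.memLp_sq]
  have : ∫ ω, ((fun ω => X ω ^ 2) * (fun ω => Y ω ^ 2)) ω = ∫ ω, X ω ^ 2 * Y ω ^ 2 := rfl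
  rw [this]
  linear_combination (1/12) * (- key)

/-- Variance of a quadratic form in jointly Gaussian variables. -/
lemma var_quad {ι : Type*} (s : Finset ι) (X : ι → Ω → ℝ) (w : ι → ℝ)
    (h : ∀ i ∈ s, CG (X i))
    (hp : ∀ i ∈ s, ∀ j ∈ s, CG (fun ω => X i ω + X j ω))
    (hm : ∀ i ∈ s, ∀ j ∈ s, CG (fun ω => X i ω - X j ω)) :
    Var[fun ω => ∑ i ∈ s, w i * X i ω ^ 2; ℙ]
      = 2 * ∑ i ∈ s, ∑ j ∈ s, w i * w j * (∫ ω, X i ω * X j ω) ^ 2 := by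
  rw [variance_fun_sum' (X := fun i ω => w i * X i ω ^ 2)
    (fun i hi => (h i hi).memLp_sq.const_mul (w i)), Finset.mul_sum]
  refine Finset.sum_congr rfl fun i hi => ?_
  rw [Finset.mul_sum]
  refine Finset.sum_congr rfl fun j hj => ?_
  rw [covariance_const_mul_left, covariance_const_mul_right,
    (h i hi).cov_sq (h j hj) (hp i hi j hj) (hm i hi j hj)]
  ring

lemma memLp_quad {ι : Type*} (s : Finset ι) (X : ι → Ω → ℝ) (w : ι → ℝ)
    (h : ∀ i ∈ s, CG (X i)) : MemLp (fun ω => ∑ i ∈ s, w i * X i ω ^ 2) 2 ℙ :=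
  memLp_finsetSum s fun i hi => (h i hi).memLp_sq.const_mul (w i)

lemma abs_cov_le {X Y : Ω → ℝ} (hX : MemLp X 2 ℙ) (hY : MemLp Y 2 ℙ) :
    |cov[X, Y; ℙ]| ≤ Real.sqrt (Var[X; ℙ] * Var[Y; ℙ]) := by
  apply Real.abs_le_sqrt
  have : ∀ t : ℝ, 0 ≤ Var[Y; ℙ] * (t * t) + (2 * cov[X, Y; ℙ]) * t + Var[X; ℙ] := by
    intro t
    have h := variance_nonneg (fun ω => X ω + t * Y ω) (ℙ : Measure Ω)
    rw [variance_fun_add (Y := fun ω => t * Y ω) hX (hY.const_mul t), variance_const_mul,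
      covariance_const_mul_right] at h
    linarith
  have := discrim_le_zero this
  unfold discrim at this
  linarith

/-- Decomposition of the mean squared error. -/
lemma mse_decomp {A B : Ω → ℝ} (hA : MemLp A 2 ℙ) (hB : MemLp B 2 ℙ) (θ : ℝ) :
    ∫ ω, (A ω - B ω - θ) ^ 2 = Var[A; ℙ] - 2 * cov[A, B; ℙ] + Var[B; ℙ]
      + ((∫ ω, A ω) - (∫ ω, B ω) - θ) ^ 2 := by
  have hAB : MemLp (fun ω => A ω - B ω) 2 ℙ := hA.sub hB
  have hZ : MemLp (fun ω => A ω - B ω - θ) 2 ℙ := hAB.sub (memLp_const θ)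
  rw [← variance_fun_sub hA hB, ← variance_sub_const hAB.1 θ, variance_eq_sub hZ]
  have iA := hA.integrable (by norm_num)
  have iB := hB.integrable (by norm_num)
  have e : ∫ ω, (A ω - B ω - θ) = (∫ ω, A ω) - (∫ ω, B ω) - θ := by
    rw [integral_sub (show Integrable (fun ω => A ω - B ω) ℙ from iA.sub iB) (integrable_const θ), integral_sub iA iB]; simp
  rw [e]
  simp
end
open MeasureTheory ProbabilityTheory Real

/-! ### Differences of bounded monotone functions -/

/-- `f` is a difference of two monotone functions with values in `[0, M]`. -/
def BM (M : ℝ) (f : ℝ → ℝ) : Prop :=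
  ∃ p q : ℝ → ℝ, Monotone p ∧ Monotone q ∧ (∀ x, 0 ≤ p x ∧ p x ≤ M) ∧ (∀ x, 0 ≤ q x ∧ q x ≤ M) ∧
    ∀ x, f x = p x - q x

lemma BM.nonneg {M : ℝ} {f : ℝ → ℝ} (h : BM M f) : 0 ≤ M := by
  obtain ⟨p, q, -, -, hp, -, -⟩ := h
  exact (hp 0).1.trans (hp 0).2

lemma BM.abs_bd {M : ℝ} {f : ℝ → ℝ} (h : BM M f) (x : ℝ) : |f x| ≤ M := by
  obtain ⟨p, q, -, -, hp, hq, h⟩ := h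
  rw [h, abs_sub_le_iff]
  constructor <;> linarith [(hp x).1, (hp x).2, (hq x).1, (hq x).2]

lemma BM.measurable {M : ℝ} {f : ℝ → ℝ} (h : BM M f) : Measurable f := by
  obtain ⟨p, q, mp, mq, hp, hq, h⟩ := h
  rw [funext h]
  exact mp.measurable.sub mq.measurable

lemma BM.intervalIntegrable {M : ℝ} {f : ℝ → ℝ} (h : BM M f) (a b : ℝ) :
    IntervalIntegrable f volume a b := by
  obtain ⟨p, q, mp, mq, hp, hq, h⟩ := h
  rw [funext h]
  exact mp.intervalIntegrable.sub mq.intervalIntegrable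

lemma BM.add {M M' : ℝ} {f g : ℝ → ℝ} (h : BM M f) (h' : BM M' g) :
    BM (M + M') (fun x => f x + g x) := by
  obtain ⟨p, q, mp, mq, hp, hq, h⟩ := h
  obtain ⟨p', q', mp', mq', hp', hq', h'⟩ := h'
  refine ⟨fun x => p x + p' x, fun x => q x + q' x, mp.add mp', mq.add mq', fun x => ?_, fun x => ?_,
    fun x => ?_⟩
  · constructor <;> linarith [(hp x).1, (hp x).2, (hp' x).1, (hp' x).2]
  · constructor <;> linarith [(hq x).1, (hq x).2, (hq' x).1, (hq' x).2]
  · dsimp only; rw [h, h']; ring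

lemma BM.mul {M M' : ℝ} {f g : ℝ → ℝ} (h : BM M f) (h' : BM M' g) :
    BM (2 * M * M') (fun x => f x * g x) := by
  have M0 := h.nonneg
  have M0' := h'.nonneg
  obtain ⟨p, q, mp, mq, hp, hq, h⟩ := h
  obtain ⟨p', q', mp', mq', hp', hq', h'⟩ := h'
  have key : ∀ a b : ℝ, (0 ≤ a ∧ a ≤ M) → (0 ≤ b ∧ b ≤ M') → 0 ≤ a * b ∧ a * b ≤ M * M' :=
    fun a b ha hb => ⟨mul_nonneg ha.1 hb.1, mul_le_mul ha.2 hb.2 hb.1 M0⟩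
  refine ⟨fun x => p x * p' x + q x * q' x, fun x => p x * q' x + q x * p' x,
    ?_, ?_, fun x => ?_, fun x => ?_, fun x => ?_⟩
  · intro x y hxy
    exact add_le_add (mul_le_mul (mp hxy) (mp' hxy) (hp' x).1 (hp y).1)
      (mul_le_mul (mq hxy) (mq' hxy) (hq' x).1 (hq y).1)
  · intro x y hxy
    exact add_le_add (mul_le_mul (mp hxy) (mq' hxy) (hq' x).1 (hp y).1)
      (mul_le_mul (mq hxy) (mp' hxy) (hp' x).1 (hq y).1)
  · have h1 := key _ _ (hp x) (hp' x)
    have h2 := key _ _ (hq x) (hq' x)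
    constructor <;> linarith [h1.1, h1.2, h2.1, h2.2]
  · have h1 := key _ _ (hp x) (hq' x)
    have h2 := key _ _ (hq x) (hp' x)
    constructor <;> linarith [h1.1, h1.2, h2.1, h2.2]
  · dsimp only; rw [h, h']; ring

lemma BM.shift {M : ℝ} {f : ℝ → ℝ} (h : BM M f) (d : ℝ) : BM M (fun x => f (x + d)) := by
  obtain ⟨p, q, mp, mq, hp, hq, h⟩ := h
  exact ⟨fun x => p (x + d), fun x => q (x + d), fun x y hxy => mp (by linarith),
    fun x y hxy => mq (by linarith), fun x => hp _, fun x => hq _, fun x => h _⟩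

lemma BM.const (C : ℝ) : BM |C| (fun _ => C) := by
  refine ⟨fun _ => max C 0, fun _ => max (-C) 0, monotone_const, monotone_const, fun x => ⟨le_max_right _ _, ?_⟩,
    fun x => ⟨le_max_right _ _, ?_⟩, fun x => ?_⟩
  · exact max_le (le_abs_self C) (abs_nonneg C)
  · exact max_le (neg_le_abs C) (abs_nonneg C)
  · rcases le_total 0 C with h | h
    · rw [max_eq_left h, max_eq_right (by linarith)]; ring
    · rw [max_eq_right h, max_eq_left (by linarith)]; ring

lemma BM.indicator_Icc {a b : ℝ} (hab : a ≤ b) : BM 1 ((Set.Icc a b).indicator fun _ => (1:ℝ)) := by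
  classical
  refine ⟨fun x => if a ≤ x then 1 else 0, fun x => if b < x then 1 else 0, ?_, ?_, ?_, ?_, ?_⟩
  · intro x y hxy; dsimp only; split_ifs <;> linarith
  · intro x y hxy; dsimp only; split_ifs <;> linarith
  · intro x; dsimp only; split_ifs <;> norm_num
  · intro x; dsimp only; split_ifs <;> norm_num
  · intro x
    simp only [Set.indicator_apply, Set.mem_Icc]
    split_ifs <;> grind

lemma BM.indicator_Ioo {a b : ℝ} (hab : a < b) : BM 1 ((Set.Ioo a b).indicator fun _ => (1:ℝ)) := by
  classical
  refine ⟨fun x => if a < x then 1 else 0, fun x => if b ≤ x then 1 else 0, ?_, ?_, ?_, ?_, ?_⟩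
  · intro x y hxy; dsimp only; split_ifs <;> linarith
  · intro x y hxy; dsimp only; split_ifs <;> linarith
  · intro x; dsimp only; split_ifs <;> norm_num
  · intro x; dsimp only; split_ifs <;> norm_num
  · intro x
    simp only [Set.indicator_apply, Set.mem_Ioo]
    split_ifs <;> grind

/-- A Lipschitz function composed with a clamp is `BM`. -/
lemma BM.lipschitz_clamp {K : NNReal} {f : ℝ → ℝ} (hf : LipschitzWith K f) {a b : ℝ} (hab : a ≤ b) :
    ∃ M, BM M (fun x => f (max a (min b x))) := by
  set cl : ℝ → ℝ := fun x => max a (min b x) with hcl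
  have cm : Monotone cl := fun x y hxy => max_le_max le_rfl (min_le_min le_rfl hxy)
  have ca : ∀ x, a ≤ cl x := fun x => le_max_left _ _
  have cb : ∀ x, cl x ≤ b := fun x => max_le hab (min_le_left _ _)
  have K0 : (0:ℝ) ≤ K := K.2
  have lip : ∀ x y, |f x - f y| ≤ K * |x - y| := fun x y => by
    have := hf.dist_le_mul x y
    simpa [Real.dist_eq] using this
  have fb : ∀ x, |f (cl x) - f a| ≤ K * (b - a) := fun x => by
    refine (lip _ _).trans (mul_le_mul_of_nonneg_left ?_ K0)
    rw [abs_of_nonneg (by linarith [ca x])]; linarith [cb x]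
  refine ⟨2 * |f a| + 2 * K * (b - a), fun x => f (cl x) + K * (cl x - a) + |f a| + K * (b - a) - (K * (b-a)) ,
    fun x => K * (cl x - a) + |f a|, ?_, ?_, ?_, ?_, ?_⟩
  · intro x y hxy
    have h1 := lip (cl x) (cl y)
    have h2 := cm hxy
    rw [abs_sub_comm (cl x), abs_of_nonneg (by linarith : 0 ≤ cl y - cl x)] at h1
    have := (abs_le.1 h1).2
    dsimp only; nlinarith
  · intro x y hxy
    have := mul_le_mul_of_nonneg_left (cm hxy) K0
    dsimp only; nlinarith
  · intro x
    have h1 := lip (cl x) a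
    rw [abs_of_nonneg (by linarith [ca x] : 0 ≤ cl x - a)] at h1
    have h3 := (abs_le.1 h1)
    have h2 := mul_le_mul_of_nonneg_left (cb x) K0
    have := neg_abs_le (f a)
    have := le_abs_self (f a)
    constructor <;> nlinarith
  · intro x
    have h0 := mul_le_mul_of_nonneg_left (ca x) K0
    have h2 := mul_le_mul_of_nonneg_left (cb x) K0
    have := abs_nonneg (f a)
    constructor <;> nlinarith
  · intro x; simp only [hcl]; ring

lemma mono_riemann {M : ℝ} {p : ℝ → ℝ} (mp : Monotone p) (hp : ∀ x, 0 ≤ p x ∧ p x ≤ M)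
    {h : ℝ} (hh : 0 < h) (x : ℝ) (N : ℕ) :
    0 ≤ (∫ u in (-x)..(h * N - x), p u) - h * ∑ j ∈ Finset.range N, p (h * j - x) ∧
    (∫ u in (-x)..(h * N - x), p u) - h * ∑ j ∈ Finset.range N, p (h * j - x) ≤ h * M := by
  have mf : Monotone (fun u => p (h * u - x)) := fun a b hab => mp (by nlinarith)
  have h1 := (mf.monotoneOn (Set.Icc 0 (0 + (N:ℝ)))).sum_le_integral
  have h2 := (mf.monotoneOn (Set.Icc 0 (0 + (N:ℝ)))).integral_le_sum
  have e : ∫ u in (0:ℝ)..(0 + (N:ℝ)), p (h * u - x) = h⁻¹ * ∫ u in (-x)..(h * N - x), p u := by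
    rw [intervalIntegral.integral_comp_mul_sub _ hh.ne']; simp
  rw [e] at h1 h2
  simp only [zero_add] at h1 h2
  have e2 : ∑ i ∈ Finset.range N, p (h * ((i + 1 : ℕ) : ℝ) - x)
      = (∑ j ∈ Finset.range N, p (h * j - x)) + p (h * N - x) - p (h * (0:ℕ) - x) := by
    have a1 := Finset.sum_range_succ (fun j : ℕ => p (h * j - x)) N
    have a2 := Finset.sum_range_succ' (fun j : ℕ => p (h * j - x)) N
    linarith
  rw [e2] at h2
  set I := ∫ u in (-x)..(h * N - x), p u
  set S := ∑ j ∈ Finset.range N, p (h * j - x)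
  have hI : h * (h⁻¹ * I) = I := by field_simp
  have h1' := mul_le_mul_of_nonneg_left h1 hh.le
  have h2' := mul_le_mul_of_nonneg_left h2 hh.le
  have b1 := (hp (h * N - x)).2
  have b2 := (hp (h * (0:ℕ) - x)).1
  rw [hI] at h1' h2'
  constructor
  · linarith
  · nlinarith

lemma BM.riemann {M : ℝ} {f : ℝ → ℝ} (hf : BM M f) {h : ℝ} (hh : 0 < h) (x : ℝ) (N : ℕ) :
    |h * ∑ j ∈ Finset.range N, f (h * j - x) - ∫ u in (-x)..(h * N - x), f u| ≤ h * M := by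
  obtain ⟨p, q, mp, mq, hp, hq, h0⟩ := hf
  have a := mono_riemann mp hp hh x N
  have b := mono_riemann mq hq hh x N
  simp only [h0]
  rw [Finset.sum_sub_distrib, intervalIntegral.integral_sub mp.intervalIntegrable mq.intervalIntegrable]
  rw [abs_le]
  constructor <;> linarith [a.1, a.2, b.1, b.2]

/-- Extension of `lam` by zero outside `[0,2]`. -/
noncomputable def lamT (lam : ℝ → ℝ) : ℝ → ℝ := (Set.Icc (0:ℝ) 2).indicator lam

lemma lamT_BM {lam : ℝ → ℝ} (hlam : IsPreAverageFn lam) : ∃ M, BM M (lamT lam) := by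
  obtain ⟨N, t, K, hN, t0, tN, hlt, hlip⟩ := hlam.piecewise_lipschitz
  suffices h : ∀ k, k ≤ N → 0 ≤ t k ∧ ∃ M, BM M ((Set.Icc (0:ℝ) (t k)).indicator lam) by
    have := (h N le_rfl).2
    rwa [tN] at this
  intro k
  induction k with
  | zero =>
    intro _
    refine ⟨t0.ge, ?_⟩
    have := (BM.indicator_Icc (le_refl (0:ℝ))).mul (BM.const (lam 0))
    refine ⟨2 * 1 * |lam 0|, ?_⟩
    · convert! this using 1
      funext x
      rw [t0]
      simp only [Set.indicator_apply, Set.mem_Icc]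
      split_ifs with hx
      · have : x = 0 := le_antisymm hx.2 hx.1
        rw [this]; ring
      · ring
  | succ k ih =>
    intro hk
    obtain ⟨h0, M1, hM1⟩ := ih (by omega)
    have hl := hlt k (by omega)
    obtain ⟨g, hg, hge⟩ := (hlip k (by omega)).extend_real
    obtain ⟨M2, hM2⟩ := BM.lipschitz_clamp hg hl.le
    have b1 := hM2.mul (BM.indicator_Ioo hl)
    have b2 := (BM.indicator_Icc (le_refl (t (k+1)))).mul (BM.const (lam (t (k+1))))
    refine ⟨h0.trans hl.le, M1 + 2 * M2 * 1 + 2 * 1 * |lam (t (k+1))|, ?_⟩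
    · convert! (hM1.add b1).add b2 using 1
      funext x
      simp only [Set.indicator_apply, Set.mem_Icc, Set.mem_Ioo]
      rcases lt_or_ge x 0 with hx | hx
      · have e1 : ¬ (0 ≤ x ∧ x ≤ t (k+1)) := by intro h; linarith [h.1]
        have e2 : ¬ (0 ≤ x ∧ x ≤ t k) := by intro h; linarith [h.1]
        have e3 : ¬ (t k < x ∧ x < t (k+1)) := by intro h; linarith [h.1]
        have e4 : ¬ (t (k+1) ≤ x ∧ x ≤ t (k+1)) := by intro h; linarith [h.1]
        simp [e1, e2, e3, e4]
      rcases le_or_gt x (t k) with hx2 | hx2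
      · have e1 : (0 ≤ x ∧ x ≤ t (k+1)) := ⟨hx, by linarith⟩
        have e2 : (0 ≤ x ∧ x ≤ t k) := ⟨hx, hx2⟩
        have e3 : ¬ (t k < x ∧ x < t (k+1)) := by intro h; linarith [h.1]
        have e4 : ¬ (t (k+1) ≤ x ∧ x ≤ t (k+1)) := by intro h; linarith [h.1]
        rw [if_pos e1, if_pos e2, if_neg e3, if_neg e4]; ring
      have e2 : ¬ (0 ≤ x ∧ x ≤ t k) := by intro h; linarith [h.2]
      rcases lt_trichotomy x (t (k+1)) with hx3 | hx3 | hx3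
      · have e1 : (0 ≤ x ∧ x ≤ t (k+1)) := ⟨hx, by linarith⟩
        have e3 : (t k < x ∧ x < t (k+1)) := ⟨hx2, hx3⟩
        have e4 : ¬ (t (k+1) ≤ x ∧ x ≤ t (k+1)) := by intro h; linarith [h.1]
        rw [if_pos e1, if_neg e2, if_pos e3, if_neg e4, min_eq_right hx3.le, max_eq_right hx2.le,
          hge e3]
        ring
      · have e1 : (0 ≤ x ∧ x ≤ t (k+1)) := ⟨hx, by linarith⟩
        have e3 : ¬ (t k < x ∧ x < t (k+1)) := by intro h; linarith [h.2]
        have e4 : (t (k+1) ≤ x ∧ x ≤ t (k+1)) := ⟨hx3.ge, hx3.le⟩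
        rw [if_pos e1, if_neg e2, if_neg e3, if_pos e4, hx3]
        ring
      · have e1 : ¬ (0 ≤ x ∧ x ≤ t (k+1)) := by intro h; linarith [h.2]
        have e3 : ¬ (t k < x ∧ x < t (k+1)) := by intro h; linarith [h.2]
        have e4 : ¬ (t (k+1) ≤ x ∧ x ≤ t (k+1)) := by intro h; linarith [h.2]
        rw [if_neg e1, if_neg e2, if_neg e3, if_neg e4]; ring
open MeasureTheory ProbabilityTheory Real

lemma integral_congr_Ioo' {f g : ℝ → ℝ} {a b : ℝ} (hab : a ≤ b) (h : ∀ x ∈ Set.Ioo a b, f x = g x) :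
    ∫ x in a..b, f x = ∫ x in a..b, g x := by
  rw [intervalIntegral.integral_of_le hab, intervalIntegral.integral_of_le hab,
    integral_Ioc_eq_integral_Ioo, integral_Ioc_eq_integral_Ioo]
  exact setIntegral_congr_fun measurableSet_Ioo h

lemma integral_zero_Ioo' {f : ℝ → ℝ} {a b : ℝ} (hab : a ≤ b) (h : ∀ x ∈ Set.Ioo a b, f x = 0) :
    ∫ x in a..b, f x = 0 := by
  rw [integral_congr_Ioo' (g := fun _ => 0) hab h]; simp

/-- Supported in `[0,2]` with parity `s` around `1`. -/
structure SymF (s : ℝ) (F : ℝ → ℝ) : Prop where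
  left : ∀ x, x < 0 → F x = 0
  right : ∀ x, 2 < x → F x = 0
  symm : ∀ x, F (2 - x) = s * F x

lemma SymF.corr_zero {s : ℝ} {F : ℝ → ℝ} (h : SymF s F) {d : ℝ} (hd : 2 ≤ |d|) :
    ∫ u in (0:ℝ)..2, F u * F (u + d) = 0 := by
  refine integral_zero_Ioo' (by norm_num) fun x hx => ?_
  rcases le_abs'.1 hd with h' | h'
  · rw [h.left (x + d) (by linarith [hx.2])]; ring
  · rw [h.right (x + d) (by linarith [hx.1])]; ring

lemma SymF.corr_one {s : ℝ} {F : ℝ → ℝ} {M : ℝ} (h : SymF s F) (hM : BM M F) :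
    ∫ u in (0:ℝ)..2, F u * F (u + 1) = s * ∫ u in (0:ℝ)..1, F u * F (1 - u) := by
  have hi := fun a b => (hM.mul (hM.shift 1)).intervalIntegrable a b
  rw [← intervalIntegral.integral_add_adjacent_intervals (hi 0 1) (hi 1 2),
    integral_zero_Ioo' (a := 1) (b := 2) (by norm_num), ← intervalIntegral.integral_const_mul, add_zero]
  · congr 1; funext u
    have := h.symm (1 - u)
    rw [show u + 1 = 2 - (1 - u) by ring, this]; ring
  · intro x hx
    rw [h.right (x + 1) (by linarith [hx.1])]; ring

lemma SymF.corr_neg_one {s : ℝ} {F : ℝ → ℝ} {M : ℝ} (h : SymF s F) (hM : BM M F) :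
    ∫ u in (0:ℝ)..2, F u * F (u + -1) = s * ∫ u in (0:ℝ)..1, F u * F (1 - u) := by
  have hi := fun a b => (hM.mul (hM.shift (-1))).intervalIntegrable a b
  rw [← intervalIntegral.integral_add_adjacent_intervals (hi 0 1) (hi 1 2),
    integral_zero_Ioo' (a := 0) (b := 1) (by norm_num), ← intervalIntegral.integral_const_mul, zero_add]
  · have e := intervalIntegral.integral_comp_add_right (a := 0) (b := 1) (fun u => F u * F (u + -1)) 1
    rw [show (0:ℝ) + 1 = 1 by norm_num, show (1:ℝ) + 1 = 2 by norm_num] at e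
    rw [← e]
    congr 1; funext u
    have := h.symm (1 - u)
    rw [show u + 1 = 2 - (1 - u) by ring, this, show 2 - (1 - u) + -1 = u by ring]; ring
  · intro x hx
    rw [h.left (x + -1) (by linarith [hx.2])]; ring

lemma SymF.corr_self {s : ℝ} {F : ℝ → ℝ} {M : ℝ} (h : SymF s F) (hs : s ^ 2 = 1) (hM : BM M F) :
    ∫ u in (0:ℝ)..2, F u * F (u + 0) = 2 * ∫ u in (0:ℝ)..1, F u ^ 2 := by
  have hi := fun a b => (hM.mul (hM.shift 0)).intervalIntegrable a b
  rw [← intervalIntegral.integral_add_adjacent_intervals (hi 0 1) (hi 1 2)]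
  have e := intervalIntegral.integral_comp_sub_left (a := 0) (b := 1) (fun u => F u * F (u + 0)) 2
  rw [show (2:ℝ) - 1 = 1 by norm_num, show (2:ℝ) - 0 = 2 by norm_num] at e
  rw [← e, two_mul]
  congr 1
  · congr 1; funext u; rw [add_zero]; ring
  · congr 1; funext u; rw [add_zero, h.symm]; linear_combination F u ^ 2 * hs

/-- Extension of `Λ`. -/
noncomputable def LamT (lam : ℝ → ℝ) (u : ℝ) : ℝ := ∫ v in u..2, lamT lam v

lemma lamT_sym {lam : ℝ → ℝ} (hlam : IsPreAverageFn lam) : SymF (-1) (lamT lam) := by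
  refine ⟨fun x hx => ?_, fun x hx => ?_, fun x => ?_⟩
  · exact Set.indicator_of_notMem (fun h => by linarith [h.1]) _
  · exact Set.indicator_of_notMem (fun h => by linarith [h.2]) _
  · unfold lamT
    by_cases hx : x ∈ Set.Icc (0:ℝ) 2
    · have hx' : 2 - x ∈ Set.Icc (0:ℝ) 2 := ⟨by linarith [hx.2], by linarith [hx.1]⟩
      rw [Set.indicator_of_mem hx, Set.indicator_of_mem hx']
      rcases le_total x 1 with h1 | h1
      · have := hlam.antisymm x ⟨hx.1, h1⟩; linarith
      · have := hlam.antisymm (2 - x) ⟨by linarith [hx.2], by linarith⟩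
        rw [show 2 - (2 - x) = x by ring] at this; linarith
    · have hx' : 2 - x ∉ Set.Icc (0:ℝ) 2 := fun h => hx ⟨by linarith [h.2], by linarith [h.1]⟩
      rw [Set.indicator_of_notMem hx, Set.indicator_of_notMem hx']; ring

lemma lamT_total {lam : ℝ → ℝ} (hlam : IsPreAverageFn lam) : ∫ u in (0:ℝ)..2, lamT lam u = 0 := by
  have e := intervalIntegral.integral_comp_sub_left (a := 0) (b := 2) (lamT lam) 2
  simp only [(lamT_sym hlam).symm, sub_self, sub_zero, intervalIntegral.integral_const_mul] at e
  linarith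

lemma LamT_right {lam : ℝ → ℝ} (hlam : IsPreAverageFn lam) {u : ℝ} (hu : 2 ≤ u) : LamT lam u = 0 := by
  unfold LamT
  rw [intervalIntegral.integral_symm, integral_zero_Ioo' hu, neg_zero]
  exact fun x hx => (lamT_sym hlam).right x hx.1

lemma LamT_left {lam : ℝ → ℝ} (hlam : IsPreAverageFn lam) {u : ℝ} (hu : u ≤ 0) : LamT lam u = 0 := by
  unfold LamT
  obtain ⟨M, hM⟩ := lamT_BM hlam
  rw [← intervalIntegral.integral_add_adjacent_intervals (hM.intervalIntegrable u 0)
    (hM.intervalIntegrable 0 2), lamT_total hlam, integral_zero_Ioo' hu, zero_add]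
  exact fun x hx => (lamT_sym hlam).left x hx.2

lemma LamT_eq {lam : ℝ → ℝ} (hlam : IsPreAverageFn lam) {u : ℝ} (hu : u ∈ Set.Icc (0:ℝ) 2) :
    LamT lam u = bigLam lam u := by
  unfold LamT bigLam
  obtain ⟨M, hM⟩ := lamT_BM hlam
  have := intervalIntegral.integral_add_adjacent_intervals (hM.intervalIntegrable 0 u)
    (hM.intervalIntegrable u 2)
  rw [lamT_total hlam] at this
  have e : ∫ v in (0:ℝ)..u, lamT lam v = ∫ v in (0:ℝ)..u, lam v :=
    integral_congr_Ioo' hu.1 fun x hx =>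
      Set.indicator_of_mem (show x ∈ Set.Icc (0:ℝ) 2 from ⟨hx.1.le, by linarith [hx.2, hu.2]⟩) _
  rw [← e]; linarith

lemma LamT_sym {lam : ℝ → ℝ} (hlam : IsPreAverageFn lam) : SymF 1 (LamT lam) := by
  refine ⟨fun x hx => LamT_left hlam hx.le, fun x hx => LamT_right hlam hx.le, fun x => ?_⟩
  unfold LamT
  obtain ⟨M, hM⟩ := lamT_BM hlam
  have e := intervalIntegral.integral_comp_sub_left (a := 0) (b := x) (lamT lam) 2
  simp only [(lamT_sym hlam).symm, sub_zero, intervalIntegral.integral_const_mul] at e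
  have := intervalIntegral.integral_add_adjacent_intervals (hM.intervalIntegrable 0 x)
    (hM.intervalIntegrable x 2)
  rw [lamT_total hlam] at this
  linarith

lemma LamT_BM {lam : ℝ → ℝ} (hlam : IsPreAverageFn lam) : ∃ M, BM M (LamT lam) := by
  obtain ⟨M, hM⟩ := lamT_BM hlam
  have hl : LipschitzWith ⟨M, hM.nonneg⟩ (LamT lam) := by
    refine LipschitzWith.of_dist_le_mul fun x y => ?_
    rw [Real.dist_eq, Real.dist_eq]
    unfold LamT
    have := intervalIntegral.integral_interval_sub_left (hM.intervalIntegrable 2 x) (hM.intervalIntegrable 2 y)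
    rw [intervalIntegral.integral_symm 2 x, intervalIntegral.integral_symm 2 y]
    have e : |(-∫ v in (2:ℝ)..x, lamT lam v) - -∫ v in (2:ℝ)..y, lamT lam v| = |∫ v in y..x, lamT lam v| := by
      rw [← this, ← abs_neg]; congr 1; ring
    rw [e]
    exact intervalIntegral.norm_integral_le_of_norm_le_const (f := lamT lam) (C := M) fun z _ => hM.abs_bd z
  obtain ⟨M', hM'⟩ := BM.lipschitz_clamp hl (show (0:ℝ) ≤ 2 by norm_num)
  refine ⟨M', ?_⟩
  convert! hM' using 1
  funext x
  rcases le_total x 0 with h | h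
  · rw [LamT_left hlam h, LamT_left hlam]; exact max_le le_rfl ((min_le_right _ _).trans h)
  · rcases le_total x 2 with h2 | h2
    · rw [min_eq_right h2, max_eq_right h]
    · rw [LamT_right hlam h2, LamT_right hlam]; exact (le_min le_rfl h2).trans (le_max_right _ _)

lemma LamT_norm {lam : ℝ → ℝ} (hlam : IsPreAverageFn lam) : 2 * (∫ u in (0:ℝ)..1, LamT lam u ^ 2) = 1 := by
  have h := hlam.normalized
  have h2 : 2 * (∫ s in (0:ℝ)..1, (∫ u in (0:ℝ)..s, lam u) ^ 2) = 1 := by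
    rwa [Real.sqrt_eq_one] at h
  refine Eq.trans ?_ h2
  congr 1
  refine integral_congr_Ioo' (by norm_num) fun x hx => ?_
  rw [LamT_eq hlam ⟨hx.1.le, by linarith [hx.2]⟩]; unfold bigLam; ring

lemma LamT_corr {lam : ℝ → ℝ} (hlam : IsPreAverageFn lam) :
    ∫ u in (0:ℝ)..1, LamT lam u * LamT lam (1 - u) = ∫ u in (0:ℝ)..1, bigLam lam u * bigLam lam (1 - u) := by
  refine integral_congr_Ioo' (by norm_num) fun x hx => ?_
  rw [LamT_eq hlam ⟨hx.1.le, by linarith [hx.2]⟩, LamT_eq hlam ⟨by linarith [hx.2], by linarith [hx.1]⟩]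

lemma lamT_eq {lam : ℝ → ℝ} {u : ℝ} (hu : u ∈ Set.Icc (0:ℝ) 2) : lamT lam u = lam u :=
  Set.indicator_of_mem hu _

lemma lamT_corr (lam : ℝ → ℝ) :
    ∫ u in (0:ℝ)..1, lamT lam u * lamT lam (1 - u) = ∫ u in (0:ℝ)..1, lam u * lam (1 - u) := by
  refine integral_congr_Ioo' (by norm_num) fun x hx => ?_
  rw [lamT_eq ⟨hx.1.le, by linarith [hx.2]⟩, lamT_eq ⟨by linarith [hx.2], by linarith [hx.1]⟩]

lemma lamT_sq (lam : ℝ → ℝ) :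
    ∫ u in (0:ℝ)..1, lamT lam u ^ 2 = ∫ u in (0:ℝ)..1, lam u ^ 2 := by
  refine integral_congr_Ioo' (by norm_num) fun x hx => ?_
  rw [lamT_eq ⟨hx.1.le, by linarith [hx.2]⟩]
open MeasureTheory ProbabilityTheory Real

lemma supp_integral {f : ℝ → ℝ} {M a b : ℝ} (hM : BM M f) (hl : ∀ x < 0, f x = 0) (hr : ∀ x, 2 < x → f x = 0)
    (ha : a ≤ 0) (hb : 2 ≤ b) : ∫ u in a..b, f u = ∫ u in (0:ℝ)..2, f u := by
  have hi := hM.intervalIntegrable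
  rw [← intervalIntegral.integral_add_adjacent_intervals (hi a 0) (hi 0 b),
    ← intervalIntegral.integral_add_adjacent_intervals (hi 0 2) (hi 2 b),
    integral_zero_Ioo' ha (fun x hx => hl x hx.2), integral_zero_Ioo' hb (fun x hx => hr x hx.1)]
  ring

lemma riem_corr {F : ℝ → ℝ} {M s : ℝ} (hM : BM M F) (hs : SymF s F) {h : ℝ} (hh : 0 < h) {n : ℕ}
    {x y : ℝ} (hx0 : 0 ≤ x) (hx : x ≤ h * n - 2) :
    |h * ∑ j ∈ Finset.range (n + 1), F (h * j - x) * F (h * j - y)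
      - ∫ u in (0:ℝ)..2, F u * F (u + (x - y))| ≤ h * (2 * M * M) := by
  have hB := hM.mul (hM.shift (x - y))
  have := hB.riemann hh x (n + 1)
  rw [supp_integral hB (fun u hu => by rw [hs.left u hu]; ring) (fun u hu => by rw [hs.right u hu]; ring)
    (by linarith) (by push_cast; linarith)] at this
  simpa only [sub_add_sub_cancel] using this

lemma ind_sum {h : ℝ} (hh : 0 < h) (x : ℝ) (N : ℕ) :
    h * ∑ j ∈ Finset.range N, (Set.Icc (0:ℝ) 2).indicator (fun _ => (1:ℝ)) (h * j - x) ≤ 2 + h := by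
  have hB := BM.indicator_Icc (show (0:ℝ) ≤ 2 by norm_num)
  have h1 := hB.riemann hh x N
  have h2 : ∫ u in (-x)..(h * N - x), (Set.Icc (0:ℝ) 2).indicator (fun _ => (1:ℝ)) u ≤ 2 := by
    have hle : -x ≤ h * N - x := by
      have : 0 ≤ h * N := by positivity
      linarith
    rw [intervalIntegral.integral_of_le hle, integral_indicator measurableSet_Icc]
    rw [Measure.restrict_restrict measurableSet_Icc]
    simp only [integral_const, smul_eq_mul, mul_one, measureReal_restrict_apply_univ]
    calc volume.real (Set.Icc (0:ℝ) 2 ∩ Set.Ioc (-x) (h * N - x)) ≤ volume.real (Set.Icc (0:ℝ) 2) :=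
          measureReal_mono Set.inter_subset_left (by simp)
      _ = 2 := by simp
  have := (abs_le.1 h1).2
  linarith

/-- Tail sums. -/
noncomputable def tailS (n : ℕ) (a : ℕ → ℝ) (p : ℕ) : ℝ := ∑ j ∈ Finset.Ico p (n + 1), a j

lemma tail_approx {lam : ℝ → ℝ} (hlam : IsPreAverageFn lam) {M : ℝ} (hM : BM M (lamT lam)) {h : ℝ} (hh : 0 < h)
    {n p : ℕ} (hp : p ≤ n) {x : ℝ} (hx : x ≤ h * n - 2) :
    |h * tailS n (fun j => lamT lam (h * j - x)) p - LamT lam (h * p - x)| ≤ h * M := by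
  have := hM.riemann hh (x - h * p) (n + 1 - p)
  have hc : ((n + 1 - p : ℕ) : ℝ) = n + 1 - p := by
    rw [Nat.cast_sub (by omega)]; push_cast; ring
  have e : ∫ u in (-(x - h * p))..(h * ((n + 1 - p : ℕ) : ℝ) - (x - h * p)), lamT lam u
      = LamT lam (h * p - x) := by
    rw [hc, ← intervalIntegral.integral_add_adjacent_intervals (hM.intervalIntegrable _ 2)
      (hM.intervalIntegrable 2 _), integral_zero_Ioo' (a := 2)]
    · unfold LamT; rw [add_zero]; congr 1; ring
    · nlinarith
    · exact fun u hu => (lamT_sym hlam).right u hu.1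
  rw [e] at this
  unfold tailS
  rw [Finset.sum_Ico_eq_sum_range]
  convert! this using 4
  refine Finset.sum_congr rfl fun j _ => ?_
  push_cast; congr 1; ring

lemma min_sum (n : ℕ) (a b : ℕ → ℝ) :
    ∑ j ∈ Finset.range (n + 1), ∑ k ∈ Finset.range (n + 1), a j * b k * (min (j:ℝ) k)
      = (∑ p ∈ Finset.range (n + 1), tailS n a p * tailS n b p) - tailS n a 0 * tailS n b 0 := by
  have ht : ∀ (c : ℕ → ℝ) (p : ℕ), tailS n c p = ∑ j ∈ Finset.range (n + 1), if p ≤ j then c j else 0 := by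
    intro c p
    unfold tailS
    rw [← Finset.sum_filter]
    congr 1
    ext j; simp only [Finset.mem_Ico, Finset.mem_filter, Finset.mem_range]; tauto
  have hmin : ∀ j ∈ Finset.range (n + 1), ∀ k ∈ Finset.range (n + 1), (min (j:ℝ) k) =
      (∑ p ∈ Finset.range (n + 1), (if p ≤ j then (1:ℝ) else 0) * (if p ≤ k then 1 else 0)) - 1 := by
    intro j hj k hk
    have e : ∀ p, (if p ≤ j then (1:ℝ) else 0) * (if p ≤ k then 1 else 0) = if p ≤ min j k then 1 else 0 := by
      intro p; simp only [le_min_iff]; split_ifs <;> first | (exfalso; tauto) | simp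
    simp only [e]
    rw [← Finset.sum_filter]
    have : (Finset.range (n + 1)).filter (fun p => p ≤ min j k) = Finset.range (min j k + 1) := by
      ext p; simp only [Finset.mem_filter, Finset.mem_range] at *; omega
    rw [this]; simp
  calc _ = ∑ j ∈ Finset.range (n + 1), ∑ k ∈ Finset.range (n + 1),
        ((∑ p ∈ Finset.range (n + 1), (if p ≤ j then a j else 0) * (if p ≤ k then b k else 0)) - a j * b k) := by
        refine Finset.sum_congr rfl fun j hj => Finset.sum_congr rfl fun k hk => ?_
        rw [hmin j hj k hk, mul_sub, mul_one, Finset.mul_sum]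
        congr 1
        refine Finset.sum_congr rfl fun p _ => ?_
        split_ifs <;> ring
    _ = _ := by
        simp only [Finset.sum_sub_distrib]
        congr 1
        · calc _ = ∑ j ∈ Finset.range (n + 1), ∑ p ∈ Finset.range (n + 1), ∑ k ∈ Finset.range (n + 1),
                (if p ≤ j then a j else 0) * (if p ≤ k then b k else 0) :=
                Finset.sum_congr rfl fun j _ => Finset.sum_comm
            _ = _ := by
                rw [Finset.sum_comm]
                refine Finset.sum_congr rfl fun p _ => ?_
                rw [ht a p, ht b p, Finset.sum_mul_sum]
        · rw [ht a 0, ht b 0, Finset.sum_mul_sum]; simp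

/-- Covariance form of linear combinations of the observations. -/
noncomputable def covF (σ τ : ℝ) (n : ℕ) (a b : ℕ → ℝ) : ℝ :=
  ∑ j ∈ Finset.range (n + 1), ∑ k ∈ Finset.range (n + 1),
    a j * b k * (σ ^ 2 * ((min (j:ℝ) k) / n) + τ ^ 2 * (if j = k then 1 else 0))

lemma covF_eq (σ τ : ℝ) (n : ℕ) (a b : ℕ → ℝ) : covF σ τ n a b =
    σ ^ 2 / n * ((∑ p ∈ Finset.range (n + 1), tailS n a p * tailS n b p) - tailS n a 0 * tailS n b 0)
      + τ ^ 2 * ∑ j ∈ Finset.range (n + 1), a j * b j := by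
  unfold covF
  rw [← min_sum, Finset.mul_sum, Finset.mul_sum, ← Finset.sum_add_distrib]
  refine Finset.sum_congr rfl fun j hj => ?_
  have : τ ^ 2 * (a j * b j) = ∑ k ∈ Finset.range (n + 1), τ ^ 2 * (if j = k then a j * b k else 0) := by
    rw [← Finset.mul_sum, Finset.sum_ite_eq, if_pos hj]
  rw [this, Finset.mul_sum, ← Finset.sum_add_distrib]
  refine Finset.sum_congr rfl fun k hk => ?_
  split_ifs <;> ring

/-- Auto-correlation. -/
noncomputable def corr (F : ℝ → ℝ) (d : ℝ) : ℝ := ∫ u in (0:ℝ)..2, F u * F (u + d)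

set_option maxHeartbeats 1000000 in
lemma cov_approx {lam : ℝ → ℝ} (hlam : IsPreAverageFn lam) (σ τ : ℝ) : ∃ K : ℝ, 0 ≤ K ∧
    ∀ (n m : ℕ), 0 < n → 0 < m → ∀ h : ℝ, h = (m:ℝ) / n → h ≤ 1 →
    ∀ x y : ℝ, 0 ≤ x → x ≤ m - 2 → 0 ≤ y → y ≤ m - 2 →
    |covF σ τ n (fun j => h * lamT lam (h * j - x)) (fun j => h * lamT lam (h * j - y))
      - (σ ^ 2 / m * corr (LamT lam) (x - y) + h * τ ^ 2 * corr (lamT lam) (x - y))| ≤ K * (1 / n + h ^ 2) := by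
  obtain ⟨M, hM⟩ := lamT_BM hlam
  obtain ⟨M', hM'⟩ := LamT_BM hlam
  have M0 := hM.nonneg
  have M0' := hM'.nonneg
  refine ⟨2 * τ ^ 2 * M ^ 2 + σ ^ 2 * (3 * M ^ 2 + 6 * M * M' + 2 * M' ^ 2), by positivity, ?_⟩
  intro n m hn hm h hh h1 x y hx0 hx hy0 hy
  have n0 : (0:ℝ) < n := by exact_mod_cast hn
  have n1 : (1:ℝ) ≤ n := by exact_mod_cast hn
  have m0 : (0:ℝ) < m := by exact_mod_cast hm
  have hpos : 0 < h := by rw [hh]; positivity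
  have hnm : h * n = m := by rw [hh]; field_simp
  rw [covF_eq]
  have tl : ∀ z p, tailS n (fun j => h * lamT lam (h * j - z)) p
      = h * tailS n (fun j => lamT lam (h * j - z)) p := by
    intro z p; unfold tailS; rw [Finset.mul_sum]
  simp only [tl]
  set A := fun p => h * tailS n (fun j => lamT lam (h * j - x)) p with hA
  set B := fun p => h * tailS n (fun j => lamT lam (h * j - y)) p with hBd
  set L := fun (z : ℝ) (p : ℕ) => LamT lam (h * p - z) with hL
  have eA : ∀ p ≤ n, |A p - L x p| ≤ h * M := fun p hp => tail_approx hlam hM hpos hp (by linarith)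
  have eB : ∀ p ≤ n, |B p - L y p| ≤ h * M := fun p hp => tail_approx hlam hM hpos hp (by linarith)
  -- endpoint
  have A0 : |A 0 * B 0| ≤ M ^ 2 := by
    have a := eA 0 (by omega)
    have b := eB 0 (by omega)
    have l1 : L x 0 = 0 := LamT_left hlam (by simp; linarith)
    have l2 : L y 0 = 0 := LamT_left hlam (by simp; linarith)
    rw [l1, sub_zero] at a
    rw [l2, sub_zero] at b
    rw [abs_mul]
    have hm1 : h * M ≤ M := by nlinarith
    calc |A 0| * |B 0| ≤ M * M := mul_le_mul (a.trans hm1) (b.trans hm1) (abs_nonneg _) M0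
      _ = M ^ 2 := by ring
  -- noise part
  have hN := riem_corr hM (lamT_sym hlam) hpos (n := n) (y := y) hx0 (by linarith)
  have hS := riem_corr hM' (LamT_sym hlam) hpos (n := n) (y := y) hx0 (by linarith)
  -- support
  have ind : ∀ z p, |L z p| ≤ M' * (Set.Icc (0:ℝ) 2).indicator (fun _ => (1:ℝ)) (h * p - z) := by
    intro z p
    by_cases hz : (h * p - z) ∈ Set.Icc (0:ℝ) 2
    · rw [Set.indicator_of_mem hz, mul_one]; exact hM'.abs_bd _
    · rw [Set.indicator_of_notMem hz, mul_zero]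
      have : L z p = 0 := by
        simp only [Set.mem_Icc, not_and_or, not_le] at hz
        rcases hz with hz | hz
        · exact LamT_left hlam hz.le
        · exact LamT_right hlam hz.le
      rw [this, abs_zero]
  have indS : ∀ z, h * ∑ p ∈ Finset.range (n + 1), |L z p| ≤ 3 * M' := by
    intro z
    have i1 := ind_sum hpos z (n + 1)
    have : ∑ p ∈ Finset.range (n + 1), |L z p| ≤ M' * ∑ j ∈ Finset.range (n + 1), (Set.Icc (0:ℝ) 2).indicator (fun _ => (1:ℝ)) (h * j - z) := by
      rw [Finset.mul_sum]; exact Finset.sum_le_sum fun p _ => ind z p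
    calc _ ≤ h * (M' * ∑ j ∈ Finset.range (n + 1), (Set.Icc (0:ℝ) 2).indicator (fun _ => (1:ℝ)) (h * j - z)) :=
          mul_le_mul_of_nonneg_left this hpos.le
      _ = M' * (h * ∑ j ∈ Finset.range (n + 1), (Set.Icc (0:ℝ) 2).indicator (fun _ => (1:ℝ)) (h * j - z)) := by ring
      _ ≤ M' * 3 := mul_le_mul_of_nonneg_left (by linarith) M0'
      _ = _ := by ring
  -- product sum
  have prod : |(∑ p ∈ Finset.range (n + 1), A p * B p) - ∑ p ∈ Finset.range (n + 1), L x p * L y p|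
      ≤ 6 * M * M' + (n + 1) * (h ^ 2 * M ^ 2) := by
    rw [← Finset.sum_sub_distrib]
    have t : ∀ p ∈ Finset.range (n + 1), |A p * B p - L x p * L y p|
        ≤ h * M * |L y p| + h * M * |L x p| + h ^ 2 * M ^ 2 := by
      intro p hp
      have hp' : p ≤ n := by simp at hp; omega
      have e : A p * B p - L x p * L y p = (A p - L x p) * L y p + (B p - L y p) * L x p
        + (A p - L x p) * (B p - L y p) := by ring
      rw [e]
      refine (abs_add_le _ _).trans (add_le_add ((abs_add_le _ _).trans (add_le_add ?_ ?_)) ?_)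
      · rw [abs_mul]; exact mul_le_mul_of_nonneg_right (eA p hp') (abs_nonneg _)
      · rw [abs_mul]; exact mul_le_mul_of_nonneg_right (eB p hp') (abs_nonneg _)
      · rw [abs_mul]
        calc _ ≤ (h * M) * (h * M) := mul_le_mul (eA p hp') (eB p hp') (abs_nonneg _) (by positivity)
          _ = _ := by ring
    refine (Finset.abs_sum_le_sum_abs _ _).trans ((Finset.sum_le_sum t).trans ?_)
    rw [Finset.sum_add_distrib, Finset.sum_add_distrib, ← Finset.mul_sum, ← Finset.mul_sum]
    simp only [Finset.sum_const, Finset.card_range, nsmul_eq_mul]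
    push_cast
    have i1 := mul_le_mul_of_nonneg_left (indS x) M0
    have i2 := mul_le_mul_of_nonneg_left (indS y) M0
    nlinarith
  -- assembly
  set PS := ∑ p ∈ Finset.range (n + 1), A p * B p
  have hS' : |(∑ p ∈ Finset.range (n + 1), L x p * L y p) / n - corr (LamT lam) (x - y) / m| ≤ 2 * M' ^ 2 / n := by
    have e : (∑ p ∈ Finset.range (n + 1), L x p * L y p) / n - corr (LamT lam) (x - y) / m
        = (h * (∑ p ∈ Finset.range (n + 1), L x p * L y p) - corr (LamT lam) (x - y)) / m := by
      rw [← hnm]; field_simp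
    rw [e, abs_div, abs_of_pos m0, div_le_iff₀ m0]
    refine hS.trans (le_of_eq ?_)
    rw [← hnm]; field_simp
  set LS := ∑ p ∈ Finset.range (n + 1), L x p * L y p
  have eN : (∑ j ∈ Finset.range (n + 1), h * lamT lam (h * j - x) * (h * lamT lam (h * j - y)))
      = h * (h * ∑ j ∈ Finset.range (n + 1), lamT lam (h * j - x) * lamT lam (h * j - y)) := by
    rw [Finset.mul_sum, Finset.mul_sum]
    exact Finset.sum_congr rfl fun j _ => by ring
  rw [eN]
  set NS := h * ∑ j ∈ Finset.range (n + 1), lamT lam (h * j - x) * lamT lam (h * j - y)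
  have e : σ ^ 2 / n * (PS - A 0 * B 0) + τ ^ 2 * (h * NS)
      - (σ ^ 2 / m * corr (LamT lam) (x - y) + h * τ ^ 2 * corr (lamT lam) (x - y))
      = σ ^ 2 * ((PS - LS) / n - A 0 * B 0 / n + (LS / n - corr (LamT lam) (x - y) / m))
        + h * τ ^ 2 * (NS - corr (lamT lam) (x - y)) := by
    field_simp; ring
  rw [e]
  have p1 : |(PS - LS) / n| ≤ 6 * M * M' / n + 2 * (h ^ 2 * M ^ 2) := by
    rw [abs_div, abs_of_pos n0, div_le_iff₀ n0]
    refine prod.trans ?_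
    have : (6 * M * M' / n + 2 * (h ^ 2 * M ^ 2)) * n = 6 * M * M' + 2 * n * (h ^ 2 * M ^ 2) := by
      field_simp
    rw [this]
    have : 0 ≤ h ^ 2 * M ^ 2 := by positivity
    nlinarith
  have p2 : |A 0 * B 0 / n| ≤ M ^ 2 / n := by
    rw [abs_div, abs_of_pos n0]; exact div_le_div_of_nonneg_right A0 n0.le
  have p3 : |(PS - LS) / n - A 0 * B 0 / n + (LS / n - corr (LamT lam) (x - y) / m)|
      ≤ 6 * M * M' / n + 2 * (h ^ 2 * M ^ 2) + M ^ 2 / n + 2 * M' ^ 2 / n :=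
    (abs_add_le _ _).trans (add_le_add ((abs_sub _ _).trans (add_le_add p1 p2)) hS')
  have p4 : |h * τ ^ 2 * (NS - corr (lamT lam) (x - y))| ≤ h * τ ^ 2 * (h * (2 * M * M)) := by
    rw [abs_mul, abs_of_nonneg (by positivity : 0 ≤ h * τ ^ 2)]
    exact mul_le_mul_of_nonneg_left hN (by positivity)
  refine (abs_add_le _ _).trans ?_
  rw [abs_mul, abs_of_nonneg (sq_nonneg σ)]
  refine (add_le_add (mul_le_mul_of_nonneg_left p3 (sq_nonneg σ)) p4).trans ?_
  set N := 1 / (n:ℝ) with hNd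
  have N0 : 0 ≤ N := by positivity
  have e5 : σ ^ 2 * (6 * M * M' / n + 2 * (h ^ 2 * M ^ 2) + M ^ 2 / n + 2 * M' ^ 2 / n) + h * τ ^ 2 * (h * (2 * M * M))
    = σ ^ 2 * (6 * M * M' * N + 2 * (h ^ 2 * M ^ 2) + M ^ 2 * N + 2 * M' ^ 2 * N) + h ^ 2 * (2 * τ ^ 2 * M ^ 2) := by
    rw [hNd]; ring
  rw [e5]
  have q1 : 0 ≤ N * (2 * τ ^ 2 * M ^ 2) := by positivity
  have q2 : 0 ≤ N * (σ ^ 2 * (2 * M ^ 2)) := by positivity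
  have q3 : 0 ≤ h ^ 2 * (σ ^ 2 * (M ^ 2 + 6 * M * M' + 2 * M' ^ 2)) := by positivity
  nlinarith
open MeasureTheory ProbabilityTheory Real

section
variable {Ω : Type*} [MeasureSpace Ω] [IsProbabilityMeasure (ℙ : Measure Ω)]

/-- Linear combinations of the observations. -/
def linC (n : ℕ) (Y : ℕ → Ω → ℝ) (a : ℕ → ℝ) (ω : Ω) : ℝ := ∑ j ∈ Finset.range (n + 1), a j * Y j ω

set_option linter.unusedSectionVars false

lemma linC_add (n : ℕ) (Y : ℕ → Ω → ℝ) (a b : ℕ → ℝ) (ω : Ω) :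
    linC n Y a ω + linC n Y b ω = linC n Y (fun j => a j + b j) ω := by
  unfold linC; rw [← Finset.sum_add_distrib]; exact Finset.sum_congr rfl fun j _ => by ring

lemma linC_sub (n : ℕ) (Y : ℕ → Ω → ℝ) (a b : ℕ → ℝ) (ω : Ω) :
    linC n Y a ω - linC n Y b ω = linC n Y (fun j => a j - b j) ω := by
  unfold linC; rw [← Finset.sum_sub_distrib]; exact Finset.sum_congr rfl fun j _ => by ring

lemma linC_single (n : ℕ) (Y : ℕ → Ω → ℝ) {k : ℕ} (hk : k ≤ n) (ω : Ω) :
    linC n Y (fun j => if j = k then 1 else 0) ω = Y k ω := by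
  unfold linC
  rw [Finset.sum_eq_single k]
  · simp
  · intro b _ hb; simp [hb]
  · intro h; exact absurd (Finset.mem_range.2 (by omega)) h

variable {n : ℕ} {W η : ℕ → Ω → ℝ} {σ τ : ℝ}

lemma model_CG (hm : IsSimplifiedModel n W η) (a b : ℕ → ℝ) :
    CG (fun ω => ∑ j ∈ Finset.range (n + 1), (a j * W j ω + b j * η j ω)) := by
  obtain ⟨hW, hη, hg, -, -, -⟩ := hm
  exact ⟨Finset.measurable_sum _ fun j _ => ((hW j).const_mul _).add ((hη j).const_mul _), hg a b⟩

lemma model_W_CG (hm : IsSimplifiedModel n W η) {k : ℕ} (hk : k ≤ n) : CG (W k) := by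
  have := model_CG hm (fun j => if j = k then 1 else 0) (fun _ => 0)
  convert! this using 1
  funext ω
  have := linC_single n W hk ω
  unfold linC at this
  simp only [zero_mul, add_zero]; exact this.symm

lemma model_η_CG (hm : IsSimplifiedModel n W η) {k : ℕ} (hk : k ≤ n) : CG (η k) := by
  have := model_CG hm (fun _ => 0) (fun j => if j = k then 1 else 0)
  convert! this using 1
  funext ω
  have := linC_single n η hk ω
  unfold linC at this
  simp only [zero_mul, zero_add]; exact this.symm

lemma linC_CG (hm : IsSimplifiedModel n W η) (a : ℕ → ℝ) : CG (linC n (obs σ τ W η) a) := by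
  have := model_CG hm (fun j => a j * σ) (fun j => a j * τ)
  convert! this using 1
  funext ω
  unfold linC obs
  exact Finset.sum_congr rfl fun j _ => by ring

lemma obs_CG (hm : IsSimplifiedModel n W η) {k : ℕ} (hk : k ≤ n) : CG (obs σ τ W η k) := by
  have := linC_CG (σ := σ) (τ := τ) hm (fun j => if j = k then 1 else 0)
  convert! this using 1
  funext ω
  exact (linC_single n _ hk ω).symm

lemma obs_cov (hm : IsSimplifiedModel n W η) {j k : ℕ} (hj : j ≤ n) (hk : k ≤ n) :
    ∫ ω, obs σ τ W η j ω * obs σ τ W η k ω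
      = σ ^ 2 * ((min (j:ℝ) k) / n) + τ ^ 2 * (if j = k then 1 else 0) := by
  have i1 : Integrable (fun ω => W j ω * W k ω) ℙ :=
    (model_W_CG hm hj).memLp2.integrable_mul (model_W_CG hm hk).memLp2
  have i2 : Integrable (fun ω => η j ω * η k ω) ℙ :=
    (model_η_CG hm hj).memLp2.integrable_mul (model_η_CG hm hk).memLp2
  have i3 : Integrable (fun ω => W j ω * η k ω) ℙ :=
    (model_W_CG hm hj).memLp2.integrable_mul (model_η_CG hm hk).memLp2
  have i4 : Integrable (fun ω => W k ω * η j ω) ℙ :=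
    (model_W_CG hm hk).memLp2.integrable_mul (model_η_CG hm hj).memLp2
  obtain ⟨-, -, -, h1, h2, h3⟩ := hm
  have e : ∀ ω, obs σ τ W η j ω * obs σ τ W η k ω = (σ ^ 2 * (W j ω * W k ω) + τ ^ 2 * (η j ω * η k ω))
      + (σ * τ * (W j ω * η k ω) + σ * τ * (W k ω * η j ω)) := by
    intro ω; unfold obs; ring
  simp only [e]
  rw [integral_add, integral_add, integral_add, integral_const_mul, integral_const_mul, integral_const_mul,
    integral_const_mul, h1 j k hj hk, h2 j k hj hk, h3 j k hj hk, h3 k j hk hj]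
  · ring
  · exact i3.const_mul _
  · exact i4.const_mul _
  · exact i1.const_mul _
  · exact i2.const_mul _
  · exact (i1.const_mul _).add (i2.const_mul _)
  · exact (i3.const_mul _).add (i4.const_mul _)

lemma linC_cov (hm : IsSimplifiedModel n W η) (a b : ℕ → ℝ) :
    ∫ ω, linC n (obs σ τ W η) a ω * linC n (obs σ τ W η) b ω = covF σ τ n a b := by
  have e : ∀ ω, linC n (obs σ τ W η) a ω * linC n (obs σ τ W η) b ω
      = ∑ j ∈ Finset.range (n + 1), ∑ k ∈ Finset.range (n + 1),
        (a j * b k) * (obs σ τ W η j ω * obs σ τ W η k ω) := by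
    intro ω; unfold linC; rw [Finset.sum_mul_sum]
    exact Finset.sum_congr rfl fun j _ => Finset.sum_congr rfl fun k _ => by ring
  simp only [e]
  have ii : ∀ j ∈ Finset.range (n + 1), ∀ k ∈ Finset.range (n + 1),
      Integrable (fun ω => (a j * b k) * (obs σ τ W η j ω * obs σ τ W η k ω)) ℙ := by
    intro j hj k hk
    rw [Finset.mem_range] at hj hk
    exact ((obs_CG hm (by omega : j ≤ n)).memLp2.integrable_mul (obs_CG hm (by omega : k ≤ n)).memLp2).const_mul _
  rw [integral_finsetSum _ fun j hj => integrable_finsetSum _ fun k hk => ii j hj k hk]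
  unfold covF
  refine Finset.sum_congr rfl fun j hj => ?_
  rw [integral_finsetSum _ fun k hk => ii j hj k hk]
  refine Finset.sum_congr rfl fun k hk => ?_
  rw [Finset.mem_range] at hj hk
  rw [integral_const_mul, obs_cov hm (by omega) (by omega)]

/-- coefficients of the increments -/
def incC (j : ℕ) : ℕ → ℝ := fun k => (if k = j then 1 else 0) - (if k = j - 1 then 1 else 0)

lemma incC_eq (Y : ℕ → Ω → ℝ) {j : ℕ} (hj : j ≤ n) (ω : Ω) :
    linC n Y (incC j) ω = Y j ω - Y (j - 1) ω := by
  unfold incC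
  rw [← linC_sub, linC_single n Y hj, linC_single n Y (by omega : j - 1 ≤ n)]

lemma inc_cov (hm : IsSimplifiedModel n W η) {j k : ℕ} (hj : j + 1 ≤ n) (hk : k + 1 ≤ n) :
    ∫ ω, linC n (obs σ τ W η) (incC (j + 1)) ω * linC n (obs σ τ W η) (incC (k + 1)) ω
      = if j = k then σ ^ 2 / n + 2 * τ ^ 2 else if j + 1 = k ∨ k + 1 = j then - τ ^ 2 else 0 := by
  simp only [incC_eq _ hj, incC_eq _ hk, Nat.add_sub_cancel]
  have i : ∀ a b, a ≤ n → b ≤ n → Integrable (fun ω => obs σ τ W η a ω * obs σ τ W η b ω) ℙ :=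
    fun a b ha hb => (obs_CG hm ha).memLp2.integrable_mul (obs_CG hm hb).memLp2
  have e : ∀ ω, (obs σ τ W η (j + 1) ω - obs σ τ W η j ω) * (obs σ τ W η (k + 1) ω - obs σ τ W η k ω)
      = (obs σ τ W η (j + 1) ω * obs σ τ W η (k + 1) ω - obs σ τ W η (j + 1) ω * obs σ τ W η k ω)
        - (obs σ τ W η j ω * obs σ τ W η (k + 1) ω - obs σ τ W η j ω * obs σ τ W η k ω) := by
    intro ω; ring
  simp only [e]
  rw [integral_sub, integral_sub, integral_sub, obs_cov hm hj hk, obs_cov hm hj (by omega),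
    obs_cov hm (by omega) hk, obs_cov hm (by omega) (by omega)]
  rotate_left
  · exact i _ _ (by omega) (by omega)
  · exact i _ _ (by omega) (by omega)
  · exact i _ _ (by omega) (by omega)
  · exact i _ _ (by omega) (by omega)
  · exact (i _ _ (by omega) (by omega)).sub (i _ _ (by omega) (by omega))
  · exact (i _ _ (by omega) (by omega)).sub (i _ _ (by omega) (by omega))
  push_cast
  rcases lt_trichotomy j k with h | h | h
  · have hr : (j:ℝ) + 1 ≤ k := by exact_mod_cast h
    rw [min_eq_left (by linarith : (j:ℝ) + 1 ≤ k + 1), min_eq_left hr, min_eq_left (by linarith : (j:ℝ) ≤ k + 1),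
      min_eq_left (by linarith : (j:ℝ) ≤ k)]
    rw [if_neg (by omega : ¬ j = k + 1), if_neg (by omega : ¬ j = k),
      if_neg (by omega : ¬ j = k)]
    by_cases h2 : j + 1 = k
    · rw [if_pos h2, if_pos (Or.inl h2)]; ring
    · rw [if_neg h2, if_neg (by omega)]; ring
  · subst h
    rw [min_self, min_self, min_eq_right (by linarith : (j:ℝ) ≤ j + 1), min_eq_left (by linarith : (j:ℝ) ≤ j + 1)]
    simp; ring
  · have hr : (k:ℝ) + 1 ≤ j := by exact_mod_cast h
    rw [min_eq_right (by linarith : (k:ℝ) + 1 ≤ j + 1), min_eq_right hr, min_eq_right (by linarith : (k:ℝ) ≤ j + 1),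
      min_eq_right (by linarith : (k:ℝ) ≤ j)]
    rw [if_neg (by omega : ¬ j + 1 = k), if_neg (by omega : ¬ j = k),
      if_neg (by omega : ¬ j = k)]
    by_cases h2 : k + 1 = j
    · rw [if_pos h2.symm, if_pos (Or.inr h2)]; ring
    · rw [if_neg (by omega : ¬ j = k + 1), if_neg (by omega)]; ring

/-- pre-averaging coefficients -/
noncomputable def paC (lam : ℝ → ℝ) (h : ℝ) (i : ℕ) : ℕ → ℝ :=
  fun j => h * lamT lam (h * j - ((i:ℝ) - 2))

lemma mem_block {n m i j : ℕ} (hn : 0 < n) (hm : 0 < m) {h : ℝ} (hh : h = (m:ℝ) / n) :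
    j ∈ blockIdx n m i ↔ j ∈ Finset.range (n + 1) ∧ h * j - ((i:ℝ) - 2) ∈ Set.Icc (0:ℝ) 2 := by
  have n0 : (0:ℝ) < n := by exact_mod_cast hn
  have m0 : (0:ℝ) < m := by exact_mod_cast hm
  unfold blockIdx
  rw [Finset.mem_filter, Set.mem_Icc]
  have e : h * j = (j:ℝ) / n * m := by rw [hh]; ring
  rw [e, div_le_iff₀ m0, le_div_iff₀ m0]
  constructor
  · rintro ⟨a, b, c⟩; exact ⟨a, by linarith, by linarith⟩
  · rintro ⟨a, b, c⟩; exact ⟨a, by linarith, by linarith⟩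

lemma preAvg_eq (lam : ℝ → ℝ) {n m : ℕ} (hn : 0 < n) (hm : 0 < m) {h : ℝ} (hh : h = (m:ℝ) / n)
    (Y : ℕ → Ω → ℝ) (i : ℕ) (ω : Ω) : preAvg lam n m Y i ω = linC n Y (paC lam h i) ω := by
  unfold preAvg linC paC
  rw [Finset.mul_sum]
  have hsub : blockIdx n m i ⊆ Finset.range (n + 1) := Finset.filter_subset _ _
  rw [← Finset.sum_subset hsub]
  · refine Finset.sum_congr rfl fun j hj => ?_
    have := ((mem_block hn hm hh).1 hj).2
    rw [lamT_eq this, ← hh, show (m:ℝ) * j / n = h * j by rw [hh]; ring]; ring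
  · intro j hj hj'
    have : ¬ (h * j - ((i:ℝ) - 2) ∈ Set.Icc (0:ℝ) 2) := fun h' => hj' ((mem_block hn hm hh).2 ⟨hj, h'⟩)
    unfold lamT
    rw [Set.indicator_of_notMem this]; ring

lemma biasCorr_eq (lam : ℝ → ℝ) {n m : ℕ} (hn : 0 < n) (hm : 0 < m) {h : ℝ} (hh : h = (m:ℝ) / n)
    (Y : ℕ → Ω → ℝ) (i : ℕ) (ω : Ω) : biasCorr lam n m Y i ω =
      ∑ j ∈ Finset.range n, (h ^ 2 / 2 * lamT lam (h * ((j + 1 : ℕ) : ℝ) - ((i:ℝ) - 2)) ^ 2)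
        * linC n Y (incC (j + 1)) ω ^ 2 := by
  unfold biasCorr
  rw [Finset.mul_sum]
  have hsub : (blockIdx n m i).filter (fun j => 1 ≤ j) ⊆ Finset.Ico 1 (n + 1) := by
    intro j hj
    rw [Finset.mem_filter, mem_block hn hm hh] at hj
    have := Finset.mem_range.1 hj.1.1
    rw [Finset.mem_Ico]; omega
  have e : ∑ j ∈ Finset.range n, (h ^ 2 / 2 * lamT lam (h * ((j + 1 : ℕ) : ℝ) - ((i:ℝ) - 2)) ^ 2)
        * linC n Y (incC (j + 1)) ω ^ 2
      = ∑ j ∈ Finset.Ico 1 (n + 1), (h ^ 2 / 2 * lamT lam (h * (j : ℝ) - ((i:ℝ) - 2)) ^ 2)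
        * linC n Y (incC j) ω ^ 2 := by
    rw [Finset.sum_Ico_eq_sum_range]
    simp only [Nat.add_sub_cancel, add_comm 1]
  rw [e, ← Finset.sum_subset hsub]
  · refine Finset.sum_congr rfl fun j hj => ?_
    have hj2 := Finset.mem_Ico.1 (hsub hj)
    have := ((mem_block hn hm hh).1 (Finset.mem_filter.1 hj).1).2
    rw [lamT_eq this, incC_eq Y (by omega), show (m:ℝ) * j / n = h * j by rw [hh]; ring, hh]
    ring
  · intro j hj hj'
    have hj2 := Finset.mem_Ico.1 hj
    have : ¬ (h * j - ((i:ℝ) - 2) ∈ Set.Icc (0:ℝ) 2) := fun h' =>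
      hj' (Finset.mem_filter.2 ⟨(mem_block hn hm hh).2 ⟨Finset.mem_range.2 (by omega), h'⟩, hj2.1⟩)
    unfold lamT
    rw [Set.indicator_of_notMem this]; ring

end
open MeasureTheory ProbabilityTheory Real

/-- weights of the squared increments in the total bias correction -/
noncomputable def wB (lam : ℝ → ℝ) (h : ℝ) (m j : ℕ) : ℝ :=
  ∑ i ∈ Finset.Icc 2 m, h ^ 2 / 2 * lamT lam (h * ((j + 1 : ℕ) : ℝ) - ((i:ℝ) - 2)) ^ 2

lemma wB_nonneg (lam : ℝ → ℝ) (h : ℝ) (m j : ℕ) : 0 ≤ wB lam h m j :=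
  Finset.sum_nonneg fun i _ => by positivity

lemma wB_le {lam : ℝ → ℝ} {M : ℝ} (hM : BM M (lamT lam)) (h : ℝ) (m j : ℕ) :
    wB lam h m j ≤ 3 / 2 * M ^ 2 * h ^ 2 := by
  set y : ℝ := h * ((j + 1 : ℕ) : ℝ) with hy
  have h1 : ∀ i : ℕ, lamT lam (y - ((i:ℝ) - 2)) ^ 2
      ≤ M ^ 2 * (Set.Icc (0:ℝ) 2).indicator (fun _ => (1:ℝ)) (1 * i - y) := by
    intro i
    by_cases hi : y - ((i:ℝ) - 2) ∈ Set.Icc (0:ℝ) 2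
    · have : (1 * (i:ℝ) - y) ∈ Set.Icc (0:ℝ) 2 := by
        rw [Set.mem_Icc] at hi ⊢; constructor <;> linarith [hi.1, hi.2]
      rw [Set.indicator_of_mem this, mul_one]
      exact sq_le_sq' (by linarith [(abs_le.1 (hM.abs_bd (y - ((i:ℝ) - 2)))).1]) (abs_le.1 (hM.abs_bd _)).2
    · have e : lamT lam (y - ((i:ℝ) - 2)) = 0 := by unfold lamT; exact Set.indicator_of_notMem hi _
      rw [e]
      have : 0 ≤ (Set.Icc (0:ℝ) 2).indicator (fun _ => (1:ℝ)) (1 * i - y) :=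
        Set.indicator_nonneg (fun _ _ => by norm_num) _
      have := mul_nonneg (sq_nonneg M) this
      simpa using this
  have h2 := ind_sum (h := 1) one_pos y (m + 1)
  unfold wB
  rw [← Finset.mul_sum]
  have h3 : ∑ i ∈ Finset.Icc 2 m, lamT lam (y - ((i:ℝ) - 2)) ^ 2 ≤ M ^ 2 * 3 := by
    calc _ ≤ ∑ i ∈ Finset.Icc 2 m, M ^ 2 * (Set.Icc (0:ℝ) 2).indicator (fun _ => (1:ℝ)) (1 * i - y) :=
          Finset.sum_le_sum fun i _ => h1 i
      _ ≤ ∑ i ∈ Finset.range (m + 1), M ^ 2 * (Set.Icc (0:ℝ) 2).indicator (fun _ => (1:ℝ)) (1 * i - y) := by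
          refine Finset.sum_le_sum_of_subset_of_nonneg ?_ ?_
          · intro i hi; rw [Finset.mem_Icc] at hi; exact Finset.mem_range.2 (by omega)
          · intro i _ _
            exact mul_nonneg (sq_nonneg M) (Set.indicator_nonneg (fun _ _ => by norm_num) _)
      _ ≤ _ := by
          rw [← Finset.mul_sum]
          exact mul_le_mul_of_nonneg_left (by linarith) (sq_nonneg M)
  have := mul_le_mul_of_nonneg_left h3 (by positivity : 0 ≤ h ^ 2 / 2)
  linarith

section
set_option linter.unusedSectionVars false
variable {Ω : Type*} [MeasureSpace Ω] [IsProbabilityMeasure (ℙ : Measure Ω)]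
variable {n : ℕ} {W η : ℕ → Ω → ℝ} {σ τ : ℝ}

lemma inc_cov_sq (hm : IsSimplifiedModel n W η) {j k : ℕ} (hj : j + 1 ≤ n) (hk : k + 1 ≤ n) :
    (∫ ω, linC n (obs σ τ W η) (incC (j + 1)) ω * linC n (obs σ τ W η) (incC (k + 1)) ω) ^ 2
      ≤ (σ ^ 2 + 2 * τ ^ 2) ^ 2 * (Set.Icc (0:ℝ) 2).indicator (fun _ => (1:ℝ)) (1 * k - (j - 1)) := by
  rw [inc_cov hm hj hk]
  have n1 : (1:ℝ) ≤ n := by exact_mod_cast (by omega : 1 ≤ n)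
  have hs : σ ^ 2 / n ≤ σ ^ 2 := div_le_self (sq_nonneg _) n1
  have hs0 : 0 ≤ σ ^ 2 / n := by positivity
  have t0 : 0 ≤ τ ^ 2 := sq_nonneg _
  have s0 : 0 ≤ σ ^ 2 := sq_nonneg _
  by_cases h1 : j = k
  · rw [if_pos h1, Set.indicator_of_mem (by subst h1; rw [Set.mem_Icc]; constructor <;> linarith), mul_one]
    exact pow_le_pow_left₀ (by linarith) (by linarith) 2
  · rw [if_neg h1]
    by_cases h2 : j + 1 = k ∨ k + 1 = j
    · have : (1 * (k:ℝ) - (j - 1)) ∈ Set.Icc (0:ℝ) 2 := by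
        rw [Set.mem_Icc]
        rcases h2 with h2 | h2
        · have : (j:ℝ) + 1 = k := by exact_mod_cast h2
          constructor <;> linarith
        · have : (k:ℝ) + 1 = j := by exact_mod_cast h2
          constructor <;> linarith
      rw [if_pos h2, Set.indicator_of_mem this, mul_one, neg_sq]
      exact pow_le_pow_left₀ (by linarith) (by linarith) 2
    · rw [if_neg h2]
      have : 0 ≤ (Set.Icc (0:ℝ) 2).indicator (fun _ => (1:ℝ)) (1 * k - (j - 1)) :=
        Set.indicator_nonneg (fun _ _ => by norm_num) _
      have := mul_nonneg (sq_nonneg (σ ^ 2 + 2 * τ ^ 2)) this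
      simpa using this

lemma VB_bd {lam : ℝ → ℝ} {M : ℝ} (hM : BM M (lamT lam)) (h : ℝ) (m : ℕ) (hm : IsSimplifiedModel n W η) :
    Var[fun ω => ∑ j ∈ Finset.range n, wB lam h m j * linC n (obs σ τ W η) (incC (j + 1)) ω ^ 2; ℙ]
      ≤ (6 * (3 / 2 * M ^ 2) ^ 2 * (σ ^ 2 + 2 * τ ^ 2) ^ 2) * (h ^ 4 * n) := by
  rw [var_quad (Finset.range n) (fun j => linC n (obs σ τ W η) (incC (j + 1))) (fun j => wB lam h m j)
    (fun i _ => linC_CG hm _)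
    (fun i _ j _ => by simp only [linC_add]; exact linC_CG hm _)
    (fun i _ j _ => by simp only [linC_sub]; exact linC_CG hm _)]
  set Q := 3 / 2 * M ^ 2 * h ^ 2 with hQ
  have Q0 : 0 ≤ Q := by positivity
  have key : ∀ j ∈ Finset.range n, ∑ k ∈ Finset.range n, wB lam h m j * wB lam h m k *
      (∫ ω, linC n (obs σ τ W η) (incC (j + 1)) ω * linC n (obs σ τ W η) (incC (k + 1)) ω) ^ 2
      ≤ Q * Q * (σ ^ 2 + 2 * τ ^ 2) ^ 2 * 3 := by
    intro j hj
    have h2 := ind_sum (h := 1) one_pos ((j:ℝ) - 1) n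
    calc _ ≤ ∑ k ∈ Finset.range n, Q * Q * (σ ^ 2 + 2 * τ ^ 2) ^ 2 *
          (Set.Icc (0:ℝ) 2).indicator (fun _ => (1:ℝ)) (1 * k - (j - 1)) := by
          refine Finset.sum_le_sum fun k hk => ?_
          rw [Finset.mem_range] at hj hk
          have a := inc_cov_sq (σ := σ) (τ := τ) hm (by omega : j + 1 ≤ n) (by omega : k + 1 ≤ n)
          have b : wB lam h m j * wB lam h m k ≤ Q * Q :=
            mul_le_mul (wB_le hM h m j) (wB_le hM h m k) (wB_nonneg _ _ _ _) Q0
          rw [mul_assoc (Q * Q)]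
          exact mul_le_mul b a (sq_nonneg _) (mul_nonneg Q0 Q0)
      _ ≤ _ := by
          rw [← Finset.mul_sum]
          exact mul_le_mul_of_nonneg_left (by linarith) (by positivity)
  have := Finset.sum_le_sum key
  rw [Finset.sum_const, Finset.card_range, nsmul_eq_mul] at this
  calc _ ≤ 2 * (n * (Q * Q * (σ ^ 2 + 2 * τ ^ 2) ^ 2 * 3)) := by linarith
    _ = _ := by rw [hQ]; ring

end

lemma comb_sum (φ : ℝ → ℝ) (h1 : φ (-1) = φ 1) (h2 : ∀ d, 2 ≤ |d| → φ d = 0) (k : ℕ) :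
    ∑ i ∈ Finset.Icc 2 (k + 2), ∑ l ∈ Finset.Icc 2 (k + 2), φ ((i:ℝ) - l) = (k + 1) * φ 0 + 2 * k * φ 1 := by
  induction k with
  | zero => simp
  | succ k ih =>
    have e1 : ∑ l ∈ Finset.Icc 2 (k + 2), φ (((k + 2 + 1 : ℕ):ℝ) - l) = φ 1 := by
      rw [Finset.sum_eq_single (k + 2)]
      · congr 1; push_cast; ring
      · intro b hb hb'
        rw [Finset.mem_Icc] at hb
        apply h2
        have : (b:ℝ) + 1 ≤ k + 2 := by exact_mod_cast (by omega : b + 1 ≤ k + 2)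
        rw [le_abs]; left; push_cast; linarith
      · intro h; exact absurd (Finset.mem_Icc.2 ⟨by omega, le_refl _⟩) h
    have e2 : ∑ l ∈ Finset.Icc 2 (k + 2), φ ((l:ℝ) - ((k + 2 + 1 : ℕ):ℝ)) = φ 1 := by
      rw [Finset.sum_eq_single (k + 2), ← h1]
      · congr 1; push_cast; ring
      · intro b hb hb'
        rw [Finset.mem_Icc] at hb
        apply h2
        have : (b:ℝ) + 1 ≤ k + 2 := by exact_mod_cast (by omega : b + 1 ≤ k + 2)
        rw [le_abs]; right; push_cast; linarith
      · intro h; exact absurd (Finset.mem_Icc.2 ⟨by omega, le_refl _⟩) h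
    rw [show k + 1 + 2 = k + 2 + 1 by ring]
    simp only [Finset.sum_Icc_succ_top (by omega : 2 ≤ k + 2 + 1), Finset.sum_add_distrib]
    rw [ih, e1, e2, sub_self]
    push_cast; ring

lemma VA_bd (C : ℕ → ℕ → ℝ) (a : ℝ → ℝ) (h1 : a (-1) = a 1) (h2 : ∀ d, 2 ≤ |d| → a d = 0) (m : ℕ) (hm : 2 ≤ m)
    (r : ℝ) (hr : 0 ≤ r)
    (hC : ∀ i ∈ Finset.Icc 2 m, ∀ l ∈ Finset.Icc 2 m, |C i l - a ((i:ℝ) - l)| ≤ r) :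
    |∑ i ∈ Finset.Icc 2 m, ∑ l ∈ Finset.Icc 2 m, C i l ^ 2 - ((m - 1) * a 0 ^ 2 + 2 * (m - 2) * a 1 ^ 2)|
      ≤ 2 * r * (m * |a 0| + 2 * m * |a 1|) + m ^ 2 * r ^ 2 := by
  obtain ⟨k, rfl⟩ : ∃ k, m = k + 2 := ⟨m - 2, by omega⟩
  have s1 := comb_sum (fun d => a d ^ 2) (by simp only [h1]) (fun d hd => by simp only [h2 d hd]; norm_num) k
  have s2 := comb_sum (fun d => |a d|) (by simp only [h1]) (fun d hd => by simp only [h2 d hd]; norm_num) k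
  have e : (((k + 2 : ℕ):ℝ) - 1) * a 0 ^ 2 + 2 * (((k + 2 : ℕ):ℝ) - 2) * a 1 ^ 2
    = (k + 1) * a 0 ^ 2 + 2 * k * a 1 ^ 2 := by push_cast; ring
  rw [e, ← s1, ← Finset.sum_sub_distrib]
  simp only [← Finset.sum_sub_distrib]
  have b : ∀ i ∈ Finset.Icc 2 (k + 2), ∀ l ∈ Finset.Icc 2 (k + 2),
      |C i l ^ 2 - a ((i:ℝ) - l) ^ 2| ≤ 2 * r * |a ((i:ℝ) - l)| + r ^ 2 := by
    intro i hi l hl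
    have hh := hC i hi l hl
    set d := C i l - a ((i:ℝ) - l) with hd
    have : C i l ^ 2 - a ((i:ℝ) - l) ^ 2 = 2 * d * a ((i:ℝ) - l) + d ^ 2 := by rw [hd]; ring
    rw [this]
    refine (abs_add_le _ _).trans (add_le_add ?_ ?_)
    · rw [abs_mul, abs_mul, abs_two]
      exact mul_le_mul_of_nonneg_right (by linarith) (abs_nonneg _)
    · rw [abs_pow]; exact pow_le_pow_left₀ (abs_nonneg _) hh 2
  refine (Finset.abs_sum_le_sum_abs _ _).trans ?_
  have b2 : ∀ i ∈ Finset.Icc 2 (k + 2), |∑ l ∈ Finset.Icc 2 (k + 2), (C i l ^ 2 - a ((i:ℝ) - l) ^ 2)|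
      ≤ ∑ l ∈ Finset.Icc 2 (k + 2), (2 * r * |a ((i:ℝ) - l)| + r ^ 2) := fun i hi =>
    (Finset.abs_sum_le_sum_abs _ _).trans (Finset.sum_le_sum fun l hl => b i hi l hl)
  refine (Finset.sum_le_sum b2).trans ?_
  simp only [Finset.sum_add_distrib, ← Finset.mul_sum]
  rw [s2]
  simp only [Finset.sum_const, Nat.card_Icc, nsmul_eq_mul]
  have k0 : (0:ℝ) ≤ k := by positivity
  have c1 : ((k + 2 + 1 - 2 : ℕ):ℝ) = k + 1 := by
    rw [show k + 2 + 1 - 2 = k + 1 by omega]; push_cast; ring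
  rw [c1]; push_cast
  have A0 := abs_nonneg (a 0)
  have A1 := abs_nonneg (a 1)
  refine add_le_add (mul_le_mul_of_nonneg_left ?_ (by positivity)) ?_
  · have := mul_le_mul_of_nonneg_right (by linarith : (k:ℝ) + 1 ≤ k + 2) A0
    have := mul_le_mul_of_nonneg_right (by linarith : 2 * (k:ℝ) ≤ 2 * (k + 2)) A1
    linarith
  · rw [← mul_assoc, ← sq]
    exact mul_le_mul_of_nonneg_right (pow_le_pow_left₀ (by linarith) (by linarith) 2) (sq_nonneg r)
open MeasureTheory ProbabilityTheory Real

lemma bias_approx {lam : ℝ → ℝ} (hlam : IsPreAverageFn lam) (σ τ : ℝ) : ∃ K : ℝ, 0 ≤ K ∧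
    ∀ (n m : ℕ), 0 < n → 0 < m → ∀ h : ℝ, h = (m:ℝ) / n → h ≤ 1 →
    ∀ x : ℝ, 0 ≤ x → x ≤ m - 2 →
    |(h ^ 2 / 2 * ∑ j ∈ Finset.range n, lamT lam (h * ((j + 1 : ℕ) : ℝ) - x) ^ 2) * (σ ^ 2 / n + 2 * τ ^ 2)
      - h * τ ^ 2 * corr (lamT lam) 0| ≤ K * (1 / n + h ^ 2) := by
  obtain ⟨M, hM⟩ := lamT_BM hlam
  have M0 := hM.nonneg
  set J := corr (lamT lam) 0 with hJ
  refine ⟨3 * M ^ 2 * τ ^ 2 + σ ^ 2 * (|J| + 3 * M ^ 2), by positivity, ?_⟩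
  intro n m hn hm h hh h1 x hx0 hx
  have n0 : (0:ℝ) < n := by exact_mod_cast hn
  have m0 : (0:ℝ) < m := by exact_mod_cast hm
  have h0 : 0 < h := by rw [hh]; positivity
  have hm' : h * n = m := by rw [hh]; field_simp
  have R := riem_corr hM (lamT_sym hlam) h0 (n := n) (x := x) (y := x) hx0 (by rw [hm']; exact hx)
  rw [sub_self, Finset.sum_range_succ'] at R
  set S := ∑ j ∈ Finset.range n, lamT lam (h * ((j + 1 : ℕ) : ℝ) - x) ^ 2 with hS
  have eS : ∑ j ∈ Finset.range n, lamT lam (h * ((j + 1 : ℕ) : ℝ) - x) * lamT lam (h * ((j + 1 : ℕ) : ℝ) - x) = S :=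
    Finset.sum_congr rfl fun j _ => by ring
  rw [eS] at R
  change |h * (S + lamT lam (h * ((0:ℕ):ℝ) - x) * lamT lam (h * ((0:ℕ):ℝ) - x)) - J| ≤ _ at R
  set z := lamT lam (h * ((0:ℕ):ℝ) - x) with hz
  have hz2 : z * z ≤ M ^ 2 := by
    have := hM.abs_bd (h * ((0:ℕ):ℝ) - x)
    rw [← hz] at this
    calc z * z = |z| ^ 2 := by rw [sq_abs]; ring
      _ ≤ M ^ 2 := pow_le_pow_left₀ (abs_nonneg _) this 2
  have hz0 : 0 ≤ z * z := mul_self_nonneg z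
  have D : |h * S - J| ≤ h * (3 * M ^ 2) := by
    rw [abs_le] at R ⊢
    have a := mul_le_mul_of_nonneg_left hz2 h0.le
    have b := mul_nonneg h0.le hz0
    constructor <;> nlinarith [R.1, R.2]
  have hSJ : |h * S| ≤ |J| + 3 * M ^ 2 := by
    have t : |h * S| ≤ |h * S - J| + |J| := by
      have := abs_add_le (h * S - J) J
      simpa using this
    have : h * (3 * M ^ 2) ≤ 1 * (3 * M ^ 2) := mul_le_mul_of_nonneg_right h1 (by positivity)
    linarith
  have e : (h ^ 2 / 2 * S) * (σ ^ 2 / n + 2 * τ ^ 2) - h * τ ^ 2 * J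
      = h * τ ^ 2 * (h * S - J) + h / 2 * (σ ^ 2 / n) * (h * S) := by ring
  rw [e]
  refine (abs_add_le _ _).trans ?_
  rw [abs_mul, abs_mul _ (h * S), abs_of_nonneg (by positivity : 0 ≤ h * τ ^ 2),
    abs_of_nonneg (by positivity : 0 ≤ h / 2 * (σ ^ 2 / n))]
  have A : h * τ ^ 2 * |h * S - J| ≤ 3 * M ^ 2 * τ ^ 2 * h ^ 2 := by
    calc _ ≤ h * τ ^ 2 * (h * (3 * M ^ 2)) := mul_le_mul_of_nonneg_left D (by positivity)
      _ = _ := by ring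
  have B : h / 2 * (σ ^ 2 / n) * |h * S| ≤ σ ^ 2 * (|J| + 3 * M ^ 2) * (1 / n) := by
    calc _ ≤ 1 * (σ ^ 2 / n) * (|J| + 3 * M ^ 2) :=
          mul_le_mul (mul_le_mul_of_nonneg_right (by linarith) (by positivity)) hSJ (abs_nonneg _) (by positivity)
      _ = _ := by ring
  have c1 : 0 ≤ 3 * M ^ 2 * τ ^ 2 * (1 / n) := by positivity
  have c2 : 0 ≤ σ ^ 2 * (|J| + 3 * M ^ 2) * h ^ 2 := by positivity
  linarith

lemma corr_LamT_zero {lam : ℝ → ℝ} (hlam : IsPreAverageFn lam) : corr (LamT lam) 0 = 1 := by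
  obtain ⟨M, hM⟩ := LamT_BM hlam
  unfold corr
  rw [(LamT_sym hlam).corr_self (by norm_num) hM, LamT_norm hlam]

universe u

/-- the approximate covariance function -/
noncomputable def aF (lam : ℝ → ℝ) (σ τ : ℝ) (m : ℕ) (h d : ℝ) : ℝ :=
  σ ^ 2 / m * corr (LamT lam) d + h * τ ^ 2 * corr (lamT lam) d

set_option maxHeartbeats 1000000 in
lemma mse_bound {lam : ℝ → ℝ} (hlam : IsPreAverageFn lam) (σ τ : ℝ) : ∃ K : ℝ, 0 ≤ K ∧
    ∀ (n m : ℕ), 0 < n → 2 ≤ m → ∀ h : ℝ, h = (m:ℝ) / n → h ≤ 1 →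
    ∀ (Ω : Type u) [MeasureSpace Ω] [IsProbabilityMeasure (ℙ : Measure Ω)] (W η : ℕ → Ω → ℝ),
    IsSimplifiedModel n W η → ∃ VA VB Cv δ : ℝ,
      (∫ ω, ((∑ i ∈ Finset.Icc 2 m, ((preAvg lam n m (obs σ τ W η) i ω) ^ 2
              - biasCorr lam n m (obs σ τ W η) i ω)) - σ ^ 2) ^ 2) = VA - 2 * Cv + VB + δ ^ 2
      ∧ |Cv| ≤ √(VA * VB) ∧ 0 ≤ VB ∧ VB ≤ K * (h ^ 4 * n)
      ∧ |δ| ≤ σ ^ 2 / m + m * (K * (1 / n + h ^ 2))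
      ∧ |VA - 2 * ((m - 1) * aF lam σ τ m h 0 ^ 2 + 2 * (m - 2) * aF lam σ τ m h 1 ^ 2)|
        ≤ 2 * (2 * (K * (1 / n + h ^ 2)) * (m * |aF lam σ τ m h 0| + 2 * m * |aF lam σ τ m h 1|)
          + m ^ 2 * (K * (1 / n + h ^ 2)) ^ 2) := by
  obtain ⟨M, hM⟩ := lamT_BM hlam
  obtain ⟨ML, hML⟩ := LamT_BM hlam
  obtain ⟨K1, hK1, H1⟩ := cov_approx hlam σ τ
  obtain ⟨K2, hK2, H2⟩ := bias_approx hlam σ τ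
  set K3 := 6 * (3 / 2 * M ^ 2) ^ 2 * (σ ^ 2 + 2 * τ ^ 2) ^ 2 with hK3
  have K30 : 0 ≤ K3 := by positivity
  refine ⟨K1 + K2 + K3, by positivity, ?_⟩
  intro n m hn hm h hh h1 Ω _ _ W η hmod
  have hm0 : 0 < m := by omega
  have n0 : (0:ℝ) < n := by exact_mod_cast hn
  have m0 : (0:ℝ) < m := by exact_mod_cast hm0
  have h0 : 0 < h := by rw [hh]; positivity
  set ε := 1 / (n:ℝ) + h ^ 2 with hε
  have ε0 : 0 ≤ ε := by positivity
  set A : Ω → ℝ := fun ω => ∑ i ∈ Finset.Icc 2 m, 1 * linC n (obs σ τ W η) (paC lam h i) ω ^ 2 with hA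
  set B : Ω → ℝ := fun ω => ∑ j ∈ Finset.range n, wB lam h m j * linC n (obs σ τ W η) (incC (j + 1)) ω ^ 2 with hB
  have LA : MemLp A 2 ℙ := memLp_quad _ (fun i => linC n (obs σ τ W η) (paC lam h i)) (fun _ => 1)
    fun i _ => linC_CG hmod _
  have LB : MemLp B 2 ℙ := memLp_quad _ (fun j => linC n (obs σ τ W η) (incC (j + 1))) (fun j => wB lam h m j)
    fun i _ => linC_CG hmod _
  have eAB : ∀ ω, (∑ i ∈ Finset.Icc 2 m, ((preAvg lam n m (obs σ τ W η) i ω) ^ 2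
              - biasCorr lam n m (obs σ τ W η) i ω)) = A ω - B ω := by
    intro ω
    rw [Finset.sum_sub_distrib, hA, hB]
    simp only [one_mul, wB, Finset.sum_mul]
    rw [Finset.sum_comm (s := Finset.range n)]
    congr 1
    · exact Finset.sum_congr rfl fun i _ => by rw [preAvg_eq lam hn hm0 hh]
    · exact Finset.sum_congr rfl fun i _ => biasCorr_eq lam hn hm0 hh _ i ω
  have EA : ∫ ω, A ω = ∑ i ∈ Finset.Icc 2 m, covF σ τ n (paC lam h i) (paC lam h i) := by
    rw [hA, integral_finsetSum _ fun i _ => ((linC_CG hmod _).memLp2.integrable_sq.const_mul 1)]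
    refine Finset.sum_congr rfl fun i _ => ?_
    rw [← linC_cov hmod]
    congr 1; funext ω; ring
  have EB : ∫ ω, B ω = ∑ i ∈ Finset.Icc 2 m, (h ^ 2 / 2 * ∑ j ∈ Finset.range n,
      lamT lam (h * ((j + 1 : ℕ) : ℝ) - ((i:ℝ) - 2)) ^ 2) * (σ ^ 2 / n + 2 * τ ^ 2) := by
    rw [hB, integral_finsetSum _ fun i _ => ((linC_CG hmod _).memLp2.integrable_sq.const_mul _)]
    rw [← Finset.sum_mul]
    simp only [Finset.mul_sum]
    rw [Finset.sum_comm, Finset.sum_mul]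
    refine Finset.sum_congr rfl fun j hj => ?_
    rw [Finset.mem_range] at hj
    rw [integral_const_mul]
    have := inc_cov (σ := σ) (τ := τ) hmod (by omega : j + 1 ≤ n) (by omega : j + 1 ≤ n)
    rw [if_pos rfl] at this
    simp only [sq (linC _ _ _ _)]
    rw [this]; rfl
  have xb : ∀ i ∈ Finset.Icc 2 m, (0:ℝ) ≤ (i:ℝ) - 2 ∧ (i:ℝ) - 2 ≤ m - 2 := by
    intro i hi
    rw [Finset.mem_Icc] at hi
    have a : (2:ℝ) ≤ i := by exact_mod_cast hi.1
    have b : (i:ℝ) ≤ m := by exact_mod_cast hi.2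
    constructor <;> linarith
  have C1 : ∀ i ∈ Finset.Icc 2 m, ∀ l ∈ Finset.Icc 2 m,
      |covF σ τ n (paC lam h i) (paC lam h l) - aF lam σ τ m h ((i:ℝ) - l)| ≤ K1 * ε := by
    intro i hi l hl
    have := H1 n m hn hm0 h hh h1 _ _ (xb i hi).1 (xb i hi).2 (xb l hl).1 (xb l hl).2
    rw [show (i:ℝ) - 2 - (l - 2) = i - l by ring] at this
    exact this
  have K1le : K1 * ε ≤ (K1 + K2 + K3) * ε := mul_le_mul_of_nonneg_right (by linarith) ε0
  have ms := mse_decomp LA LB (σ ^ 2)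
  refine ⟨Var[A; ℙ], Var[B; ℙ], cov[A, B; ℙ], (∫ ω, A ω) - (∫ ω, B ω) - σ ^ 2, ?_, abs_cov_le LA LB,
    variance_nonneg _ _, ?_, ?_, ?_⟩
  · simp only [eAB]; exact ms
  · refine (VB_bd hM h m hmod).trans ?_
    exact mul_le_mul_of_nonneg_right (by linarith) (by positivity)
  · rw [EA, EB, ← Finset.sum_sub_distrib]
    have cm : ((m + 1 - 2 : ℕ):ℝ) = m - 1 := by
      rw [show m + 1 - 2 = m - 1 by omega, Nat.cast_sub (by omega)]; norm_num
    have e : ∑ i ∈ Finset.Icc 2 m, σ ^ 2 / (m:ℝ) = σ ^ 2 - σ ^ 2 / m := by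
      rw [Finset.sum_const, Nat.card_Icc, nsmul_eq_mul, cm]; field_simp
    have T : ∀ i ∈ Finset.Icc 2 m, |covF σ τ n (paC lam h i) (paC lam h i) - (h ^ 2 / 2 * ∑ j ∈ Finset.range n,
      lamT lam (h * ((j + 1 : ℕ) : ℝ) - ((i:ℝ) - 2)) ^ 2) * (σ ^ 2 / n + 2 * τ ^ 2) - σ ^ 2 / m|
        ≤ (K1 + K2 + K3) * ε := by
      intro i hi
      have a := C1 i hi i hi
      have b := H2 n m hn hm0 h hh h1 _ (xb i hi).1 (xb i hi).2
      rw [sub_self] at a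
      unfold aF at a
      rw [corr_LamT_zero hlam] at a
      have c : 0 ≤ K3 * ε := mul_nonneg K30 ε0
      rw [abs_le] at a b ⊢
      constructor <;> linarith [a.1, a.2, b.1, b.2]
    have S := (Finset.abs_sum_le_sum_abs _ _).trans (Finset.sum_le_sum T)
    rw [Finset.sum_sub_distrib, e, Finset.sum_const, Nat.card_Icc, nsmul_eq_mul, cm] at S
    have P : 0 ≤ (K1 + K2 + K3) * ε := by positivity
    have Q : 0 ≤ σ ^ 2 / (m:ℝ) := by positivity
    rw [abs_le] at S ⊢
    constructor <;> nlinarith [S.1, S.2]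
  · have V := var_quad (Finset.Icc 2 m) (fun i => linC n (obs σ τ W η) (paC lam h i)) (fun _ => 1)
      (fun i _ => linC_CG hmod _)
      (fun i _ j _ => by simp only [linC_add]; exact linC_CG hmod _)
      (fun i _ j _ => by simp only [linC_sub]; exact linC_CG hmod _)
    simp only [linC_cov hmod, one_mul] at V
    have VA' : Var[A; ℙ] = 2 * ∑ i ∈ Finset.Icc 2 m, ∑ l ∈ Finset.Icc 2 m, covF σ τ n (paC lam h i) (paC lam h l) ^ 2 := by
      rw [← V, hA]; simp only [one_mul]
    have s1 := lamT_sym hlam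
    have s2 := LamT_sym hlam
    have := VA_bd (fun i l => covF σ τ n (paC lam h i) (paC lam h l)) (aF lam σ τ m h)
      (by unfold aF corr; rw [s1.corr_one hM, s2.corr_one hML, s1.corr_neg_one hM, s2.corr_neg_one hML])
      (fun d hd => by unfold aF corr; rw [s1.corr_zero hd, s2.corr_zero hd]; ring) m hm ((K1 + K2 + K3) * ε)
      (by positivity) (fun i hi l hl => (C1 i hi l hl).trans K1le)
    rw [VA', ← mul_sub, abs_mul, abs_two]
    exact mul_le_mul_of_nonneg_left this (by norm_num)
open MeasureTheory ProbabilityTheory Real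

lemma s_tendsto : Filter.Tendsto (fun n : ℕ => (√(n:ℝ))⁻¹) Filter.atTop (nhds 0) :=
  tendsto_inv_atTop_zero.comp (tendsto_sqrt_atTop.comp tendsto_natCast_atTop_atTop)

lemma x_tendsto {c : ℝ} (hc : 0 < c) :
    Filter.Tendsto (fun n : ℕ => (mOf c n : ℝ) * (√(n:ℝ))⁻¹) Filter.atTop (nhds c) := by
  have hs : Filter.Tendsto (fun n : ℕ => √(n:ℝ)) Filter.atTop Filter.atTop :=
    tendsto_sqrt_atTop.comp tendsto_natCast_atTop_atTop
  have hd : Filter.Tendsto (fun n : ℕ => √(n:ℝ) / c) Filter.atTop Filter.atTop := hs.atTop_div_const hc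
  have h1 : Filter.Tendsto (fun n : ℕ => ((⌊√(n:ℝ) / c⌋₊ : ℕ):ℝ) / (√(n:ℝ) / c)) Filter.atTop (nhds 1) :=
    (tendsto_nat_floor_div_atTop (R := ℝ)).comp hd
  have h2 : Filter.Tendsto (fun n : ℕ => √(n:ℝ) / ((⌊√(n:ℝ) / c⌋₊ : ℕ):ℝ)) Filter.atTop (nhds c) := by
    have := (h1.inv₀ one_ne_zero).const_mul c
    rw [inv_one, mul_one] at this
    refine this.congr fun n => ?_
    rw [inv_div, ← mul_div_assoc, mul_div_cancel₀ _ hc.ne']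
  have h3 := h2.sub s_tendsto
  rw [sub_zero] at h3
  have ev : ∀ᶠ n : ℕ in Filter.atTop, 0 < √(n:ℝ) ∧ 1 ≤ √(n:ℝ) / c :=
    (hs.eventually_gt_atTop 0).and (hd.eventually_ge_atTop 1)
  refine tendsto_of_tendsto_of_tendsto_of_le_of_le' h3 h2 ?_ ?_
  · filter_upwards [ev] with n hn
    have k0 : 0 < ⌊√(n:ℝ) / c⌋₊ := Nat.floor_pos.2 hn.2
    have k0' : (0:ℝ) < (⌊√(n:ℝ) / c⌋₊ : ℕ) := by exact_mod_cast k0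
    have hq : √(n:ℝ) * √(n:ℝ) = n := Real.mul_self_sqrt (by positivity)
    have := Nat.lt_floor_add_one ((n:ℝ) / (⌊√(n:ℝ) / c⌋₊ : ℕ))
    rw [Nat.floor_div_eq_div] at this
    have e : √(n:ℝ) / (⌊√(n:ℝ) / c⌋₊ : ℕ) = (n:ℝ) / (⌊√(n:ℝ) / c⌋₊ : ℕ) * (√(n:ℝ))⁻¹ := by
      nth_rewrite 3 [← hq]
      have := hn.1.ne'
      field_simp
    rw [e, ← sub_one_mul]
    exact mul_le_mul_of_nonneg_right (by unfold mOf; linarith) (inv_nonneg.2 hn.1.le)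
  · filter_upwards [ev] with n hn
    have hq : √(n:ℝ) * √(n:ℝ) = n := Real.mul_self_sqrt (by positivity)
    have := Nat.cast_div_le (α := ℝ) (m := n) (n := ⌊√(n:ℝ) / c⌋₊)
    have k0 : 0 < ⌊√(n:ℝ) / c⌋₊ := Nat.floor_pos.2 hn.2
    have k0' : (0:ℝ) < (⌊√(n:ℝ) / c⌋₊ : ℕ) := by exact_mod_cast k0
    have e : √(n:ℝ) / (⌊√(n:ℝ) / c⌋₊ : ℕ) = (n:ℝ) / (⌊√(n:ℝ) / c⌋₊ : ℕ) * (√(n:ℝ))⁻¹ := by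
      nth_rewrite 3 [← hq]
      have := hn.1.ne'
      field_simp
    rw [e]
    exact mul_le_mul_of_nonneg_right this (inv_nonneg.2 hn.1.le)

/-- squeeze-type estimate for the rescaled mean squared error -/
lemma final_est {q s x m n h K σ a0 a1 α β VA VB Cv δ : ℝ} (hq : 0 < q) (hx : 0 < x)
    (hs : s = q⁻¹) (hm : m = x * q) (hn : n = q ^ 2) (hh : h = m / n)
    (ha0 : a0 = s * α) (ha1 : a1 = s * β)
    (hC : |Cv| ≤ √(VA * VB)) (hVB0 : 0 ≤ VB) (hVB : VB ≤ K * (h ^ 4 * n))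
    (hδ : |δ| ≤ σ ^ 2 / m + m * (K * (1 / n + h ^ 2)))
    (hVA : |VA - 2 * ((m - 1) * a0 ^ 2 + 2 * (m - 2) * a1 ^ 2)|
        ≤ 2 * (2 * (K * (1 / n + h ^ 2)) * (m * |a0| + 2 * m * |a1|) + m ^ 2 * (K * (1 / n + h ^ 2)) ^ 2)) :
    |q * (VA - 2 * Cv + VB + δ ^ 2) - 2 * ((x - s) * α ^ 2 + 2 * (x - 2 * s) * β ^ 2)|
      ≤ s * (2 * (2 * K * (1 + x ^ 2) * (x * |α| + 2 * x * |β|) + x ^ 2 * K ^ 2 * (1 + x ^ 2) ^ 2))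
        + 2 * √((|2 * ((x - s) * α ^ 2 + 2 * (x - 2 * s) * β ^ 2)|
          + s * (2 * (2 * K * (1 + x ^ 2) * (x * |α| + 2 * x * |β|) + x ^ 2 * K ^ 2 * (1 + x ^ 2) ^ 2))) * (s * (K * x ^ 4)))
        + s * (K * x ^ 4) + s * (σ ^ 2 / x + x * K * (1 + x ^ 2)) ^ 2 := by
  have s0 : 0 < s := by rw [hs]; positivity
  have hqs : q = s⁻¹ := by rw [hs, inv_inv]
  have hm' : m = x / s := by rw [hm, hqs]; ring
  have hn' : n = (s ^ 2)⁻¹ := by rw [hn, hqs]; ring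
  have hh' : h = x * s := by rw [hh, hm', hn']; field_simp
  have hr : 1 / n + h ^ 2 = s ^ 2 * (1 + x ^ 2) := by rw [hh', hn']; field_simp
  set P := 2 * ((x - s) * α ^ 2 + 2 * (x - 2 * s) * β ^ 2) with hP
  set E := s * (2 * (2 * K * (1 + x ^ 2) * (x * |α| + 2 * x * |β|) + x ^ 2 * K ^ 2 * (1 + x ^ 2) ^ 2)) with hE
  have A : |q * VA - P| ≤ E := by
    have := mul_le_mul_of_nonneg_left hVA hq.le
    rw [hr, ha0, ha1, abs_mul s α, abs_mul s β, abs_of_pos s0] at this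
    have e1 : q * VA - P = q * (VA - 2 * ((m - 1) * (s * α) ^ 2 + 2 * (m - 2) * (s * β) ^ 2)) := by
      rw [hP, hqs, hm']; field_simp
    rw [e1, abs_mul, abs_of_pos hq]
    refine this.trans (le_of_eq ?_)
    rw [hE, hqs, hm']; field_simp
  have B : q * VB ≤ s * (K * x ^ 4) := by
    have := mul_le_mul_of_nonneg_left hVB hq.le
    refine this.trans (le_of_eq ?_)
    rw [hqs, hh', hn']; field_simp
  have B0 : 0 ≤ q * VB := mul_nonneg hq.le hVB0
  have D : q * δ ^ 2 ≤ s * (σ ^ 2 / x + x * K * (1 + x ^ 2)) ^ 2 := by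
    have d2 : δ ^ 2 ≤ (σ ^ 2 / m + m * (K * (1 / n + h ^ 2))) ^ 2 := by
      rw [← sq_abs δ]; exact pow_le_pow_left₀ (abs_nonneg _) hδ 2
    have := mul_le_mul_of_nonneg_left d2 hq.le
    refine this.trans (le_of_eq ?_)
    rw [hr, hqs, hm']; field_simp
  have D0 : 0 ≤ q * δ ^ 2 := by positivity
  have A2 : q * VA ≤ |P| + E := by linarith [(abs_le.1 A).2, le_abs_self P]
  have Cc : q * |Cv| ≤ √((|P| + E) * (s * (K * x ^ 4))) := by
    calc q * |Cv| ≤ q * √(VA * VB) := mul_le_mul_of_nonneg_left hC hq.le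
      _ = √((q * VA) * (q * VB)) := by
          rw [show (q * VA) * (q * VB) = q ^ 2 * (VA * VB) by ring, Real.sqrt_mul (sq_nonneg q), Real.sqrt_sq hq.le]
      _ ≤ _ := by
          apply Real.sqrt_le_sqrt
          refine (mul_le_mul_of_nonneg_right A2 B0).trans (mul_le_mul_of_nonneg_left B ?_)
          have : 0 ≤ E := (abs_nonneg _).trans A
          positivity
  have e : q * (VA - 2 * Cv + VB + δ ^ 2) - P = (q * VA - P) - 2 * (q * Cv) + q * VB + q * δ ^ 2 := by ring
  have C2 : |q * Cv| ≤ √((|P| + E) * (s * (K * x ^ 4))) := by rw [abs_mul, abs_of_pos hq]; exact Cc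
  rw [e]
  rw [abs_le] at A C2 ⊢
  constructor <;> linarith [A.1, A.2, C2.1, C2.2]

theorem MSE_integratedVolatilityEstimator (σ τ c : ℝ) (hσ : 0 < σ) (hτ : 0 < τ) (hc : 0 < c)
    (lam : ℝ → ℝ) (hlam : IsPreAverageFn lam)
    (Ω : ℕ → Type*) [∀ n, MeasureSpace (Ω n)] [∀ n, IsProbabilityMeasure (ℙ : Measure (Ω n))]
    (W η : (n : ℕ) → ℕ → Ω n → ℝ)
    (hmodel : ∀ n, IsSimplifiedModel n (W n) (η n)) :
    Filter.Tendsto (fun n : ℕ => Real.sqrt n *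
        ∫ ω, ((∑ i ∈ Finset.Icc 2 (mOf c n),
            ((preAvg lam n (mOf c n) (obs σ τ (W n) (η n)) i ω) ^ 2
              - biasCorr lam n (mOf c n) (obs σ τ (W n) (η n)) i ω)) - σ ^ 2) ^ 2)
      Filter.atTop
      (nhds ((4 / c) * (σ ^ 2 * (∫ u in (0:ℝ)..1, bigLam lam u * bigLam lam (1 - u))
              - τ ^ 2 * c ^ 2 * ∫ u in (0:ℝ)..1, lam u * lam (1 - u)) ^ 2
          + (2 / c) * (σ ^ 2 + 2 * τ ^ 2 * c ^ 2 * ∫ u in (0:ℝ)..1, (lam u) ^ 2) ^ 2)) := by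
  obtain ⟨K, hK, H⟩ := mse_bound hlam σ τ
  obtain ⟨M, hM⟩ := lamT_BM hlam
  obtain ⟨ML, hML⟩ := LamT_BM hlam
  set I1 := ∫ u in (0:ℝ)..1, bigLam lam u * bigLam lam (1 - u) with hI1
  set J1 := ∫ u in (0:ℝ)..1, lam u * lam (1 - u) with hJ1
  set J := ∫ u in (0:ℝ)..1, (lam u) ^ 2 with hJ
  have cL0 := corr_LamT_zero hlam
  have cl0 : corr (lamT lam) 0 = 2 * J := by
    unfold corr; rw [(lamT_sym hlam).corr_self (by norm_num) hM, lamT_sq]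
  have cL1 : corr (LamT lam) 1 = I1 := by
    unfold corr; rw [(LamT_sym hlam).corr_one hML, LamT_corr hlam, one_mul]
  have cl1 : corr (lamT lam) 1 = -J1 := by
    unfold corr; rw [(lamT_sym hlam).corr_one hM, lamT_corr, neg_one_mul]
  have hs := s_tendsto
  have hx := x_tendsto hc
  have hα : Filter.Tendsto (fun n : ℕ => σ ^ 2 / ((mOf c n : ℝ) * (√(n:ℝ))⁻¹)
      + (mOf c n : ℝ) * (√(n:ℝ))⁻¹ * τ ^ 2 * (2 * J)) Filter.atTop
      (nhds (σ ^ 2 / c + c * τ ^ 2 * (2 * J))) :=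
    (tendsto_const_nhds.div hx hc.ne').add ((hx.mul_const _).mul_const _)
  have hβ : Filter.Tendsto (fun n : ℕ => σ ^ 2 / ((mOf c n : ℝ) * (√(n:ℝ))⁻¹) * I1
      + (mOf c n : ℝ) * (√(n:ℝ))⁻¹ * τ ^ 2 * (-J1)) Filter.atTop
      (nhds (σ ^ 2 / c * I1 + c * τ ^ 2 * (-J1))) :=
    ((tendsto_const_nhds.div hx hc.ne').mul_const _).add ((hx.mul_const _).mul_const _)
  have hγ : Filter.Tendsto (fun n : ℕ => σ ^ 2 / ((mOf c n : ℝ) * (√(n:ℝ))⁻¹)) Filter.atTop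
      (nhds (σ ^ 2 / c)) := tendsto_const_nhds.div hx hc.ne'
  generalize hsd : (fun n : ℕ => (√(n:ℝ))⁻¹) = s at hs
  generalize hxd : (fun n : ℕ => (mOf c n : ℝ) * (√(n:ℝ))⁻¹) = x at hx
  generalize hαd : (fun n : ℕ => σ ^ 2 / ((mOf c n : ℝ) * (√(n:ℝ))⁻¹)
      + (mOf c n : ℝ) * (√(n:ℝ))⁻¹ * τ ^ 2 * (2 * J)) = α at hα
  generalize hβd : (fun n : ℕ => σ ^ 2 / ((mOf c n : ℝ) * (√(n:ℝ))⁻¹) * I1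
      + (mOf c n : ℝ) * (√(n:ℝ))⁻¹ * τ ^ 2 * (-J1)) = β at hβ
  generalize hγd : (fun n : ℕ => σ ^ 2 / ((mOf c n : ℝ) * (√(n:ℝ))⁻¹)) = γ at hγ
  have hP : Filter.Tendsto (fun n => 2 * ((x n - s n) * α n ^ 2 + 2 * (x n - 2 * s n) * β n ^ 2)) Filter.atTop
      (nhds (2 * ((c - 0) * (σ ^ 2 / c + c * τ ^ 2 * (2 * J)) ^ 2
        + 2 * (c - 2 * 0) * (σ ^ 2 / c * I1 + c * τ ^ 2 * (-J1)) ^ 2))) :=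
    (((hx.sub hs).mul (hα.pow 2)).add (((hx.sub (hs.const_mul 2)).const_mul 2).mul (hβ.pow 2))).const_mul 2
  have lim : (4 / c) * (σ ^ 2 * I1 - τ ^ 2 * c ^ 2 * J1) ^ 2 + (2 / c) * (σ ^ 2 + 2 * τ ^ 2 * c ^ 2 * J) ^ 2
      = 2 * ((c - 0) * (σ ^ 2 / c + c * τ ^ 2 * (2 * J)) ^ 2
        + 2 * (c - 2 * 0) * (σ ^ 2 / c * I1 + c * τ ^ 2 * (-J1)) ^ 2) := by
    have := hc.ne'
    field_simp; ring
  have hx2 : Filter.Tendsto (fun n => 1 + x n ^ 2) Filter.atTop (nhds (1 + c ^ 2)) :=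
    tendsto_const_nhds.add (hx.pow 2)
  have hE : Filter.Tendsto (fun n => s n * (2 * (2 * K * (1 + x n ^ 2) * (x n * |α n| + 2 * x n * |β n|)
      + x n ^ 2 * K ^ 2 * (1 + x n ^ 2) ^ 2))) Filter.atTop (nhds 0) := by
    have := hs.mul ((((hx2.const_mul (2 * K)).mul ((hx.mul hα.abs).add ((hx.const_mul 2).mul hβ.abs))).add
      (((hx.pow 2).mul_const (K ^ 2)).mul (hx2.pow 2))).const_mul 2)
    rw [zero_mul] at this
    exact this
  have hV : Filter.Tendsto (fun n => s n * (K * x n ^ 4)) Filter.atTop (nhds 0) := by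
    have := hs.mul ((hx.pow 4).const_mul K)
    rw [zero_mul] at this
    exact this
  have hD : Filter.Tendsto (fun n => s n * (γ n + x n * K * (1 + x n ^ 2)) ^ 2) Filter.atTop (nhds 0) := by
    have := hs.mul ((hγ.add ((hx.mul_const K).mul hx2)).pow 2)
    rw [zero_mul] at this
    exact this
  have hR : Filter.Tendsto (fun n => 2 * √((|2 * ((x n - s n) * α n ^ 2 + 2 * (x n - 2 * s n) * β n ^ 2)|
          + s n * (2 * (2 * K * (1 + x n ^ 2) * (x n * |α n| + 2 * x n * |β n|)
            + x n ^ 2 * K ^ 2 * (1 + x n ^ 2) ^ 2))) * (s n * (K * x n ^ 4)))) Filter.atTop (nhds 0) := by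
    have := (((hP.abs.add hE).mul hV).sqrt).const_mul 2
    rw [mul_zero, Real.sqrt_zero, mul_zero] at this
    exact this
  have hT := ((hE.add hR).add hV).add hD
  simp only [add_zero] at hT
  rw [lim]
  have hdiff : Filter.Tendsto (fun n : ℕ => Real.sqrt n *
        (∫ ω, ((∑ i ∈ Finset.Icc 2 (mOf c n),
            ((preAvg lam n (mOf c n) (obs σ τ (W n) (η n)) i ω) ^ 2
              - biasCorr lam n (mOf c n) (obs σ τ (W n) (η n)) i ω)) - σ ^ 2) ^ 2)
        - 2 * ((x n - s n) * α n ^ 2 + 2 * (x n - 2 * s n) * β n ^ 2)) Filter.atTop (nhds 0) := by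
    refine squeeze_zero_norm' ?_ hT
    have ev1 : ∀ᶠ n in Filter.atTop, c / 2 < x n := hx.eventually_const_lt (by linarith)
    have ev2 : ∀ᶠ n in Filter.atTop, x n * s n < 1 :=
      (hx.mul hs).eventually_lt_const (by rw [mul_zero]; norm_num)
    have ev3 : ∀ᶠ n in Filter.atTop, s n < c / 4 := hs.eventually_lt_const (by linarith)
    filter_upwards [ev1, ev2, ev3, Filter.eventually_gt_atTop 0] with n e1 e2 e3 hn
    have n0 : (0:ℝ) < n := by exact_mod_cast hn
    have q0 : 0 < √(n:ℝ) := Real.sqrt_pos.2 n0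
    have hq2 : (n:ℝ) = √(n:ℝ) ^ 2 := (Real.sq_sqrt n0.le).symm
    have es : s n = (√(n:ℝ))⁻¹ := by rw [← hsd]
    have ex : x n = (mOf c n : ℝ) * (√(n:ℝ))⁻¹ := by rw [← hxd]
    have eγ : γ n = σ ^ 2 / x n := by rw [← hγd, ex]
    have eα : α n = σ ^ 2 / x n + x n * τ ^ 2 * (2 * J) := by rw [← hαd, ex]
    have eβ : β n = σ ^ 2 / x n * I1 + x n * τ ^ 2 * (-J1) := by rw [← hβd, ex]
    have x0 : 0 < x n := by linarith
    have em : (mOf c n : ℝ) = x n * √(n:ℝ) := by rw [ex]; field_simp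
    have eq' : √(n:ℝ) = (s n)⁻¹ := by rw [es, inv_inv]
    have s0 : 0 < s n := by rw [es]; positivity
    have hm2 : 2 ≤ mOf c n := by
      have : (2:ℝ) ≤ mOf c n := by
        rw [em, eq', ← div_eq_mul_inv, le_div_iff₀ s0]; linarith
      exact_mod_cast this
    have hh1 : (mOf c n : ℝ) / n = x n * s n := by
      rw [em, es]; nth_rewrite 2 [hq2]; field_simp
    obtain ⟨VA, VB, Cv, δ, h1, h2, h3, h4, h5, h6⟩ := H n (mOf c n) hn hm2 _ rfl (by rw [hh1]; exact e2.le)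
      (Ω n) (W n) (η n) (hmodel n)
    have a0 : aF lam σ τ (mOf c n) ((mOf c n : ℝ) / n) 0 = s n * α n := by
      unfold aF
      rw [cL0, cl0, eα, hh1, em, eq']; field_simp
    have a1 : aF lam σ τ (mOf c n) ((mOf c n : ℝ) / n) 1 = s n * β n := by
      unfold aF
      rw [cL1, cl1, eβ, hh1, em, eq']; field_simp
    rw [h1, Real.norm_eq_abs, eγ]
    exact final_est q0 x0 es em hq2 rfl a0 a1 h2 h3 h4 h5 h6
  have := hdiff.add hP
  simp only [sub_add_cancel, zero_add] at this
  exact this
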